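/- Let p = 3. Under the null hypothesis of uniformity, i.e., under P_0^{(n)} = U_3^{⊗n} on (S^2)^n, the two-sided test statistic T_±^{(n)}(x) := √n max( |3 λ̂_{n1}(x) − 1|, |3 λ̂_{n3}(x) − 1| ) converges in distribution, as n → ∞, to the probability distribution on ℝ with cumulative distribution function ℓ ↦ { 2 Φ(√5 ℓ / 2) + 6 Φ''(√5 ℓ / 2) − 2√3 Φ''(√5 ℓ / √3) − 1 } · 1[ℓ > 0], where Φ is the standard normal cumulative distribution function and Φ''(t) = −t e^{−t²/2}/√(2π) is its second derivative. -/

import Mathlib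

open MeasureTheory ProbabilityTheory Filter Matrix Real
open scoped ENNReal NNReal Topology

noncomputable section

/-- The sample covariance matrix `S_n(x) = (1/n) Σ_i x_i x_i'`. -/
def Sn (p n : ℕ) (x : Fin n → (Fin p → ℝ)) : Matrix (Fin p) (Fin p) ℝ :=
  Matrix.of fun a b => (1 / (n:ℝ)) * ∑ i, x i a * x i b

/-- Largest eigenvalue of a (symmetric) real matrix, via the Rayleigh quotient. -/
def maxEig {p : ℕ} (A : Matrix (Fin p) (Fin p) ℝ) : ℝ :=
  sSup {r | ∃ v : Fin p → ℝ, (∑ i, v i ^ 2) = 1 ∧ r = v ⬝ᵥ A.mulVec v}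

/-- Smallest eigenvalue of a (symmetric) real matrix, via the Rayleigh quotient. -/
def minEig {p : ℕ} (A : Matrix (Fin p) (Fin p) ℝ) : ℝ :=
  sInf {r | ∃ v : Fin p → ℝ, (∑ i, v i ^ 2) = 1 ∧ r = v ⬝ᵥ A.mulVec v}

/-- The standard normal cumulative distribution function `Φ`. -/
def stdNormalCDF (t : ℝ) : ℝ :=
  ∫ u in Set.Iic t, (Real.sqrt (2 * Real.pi))⁻¹ * Real.exp (-u ^ 2 / 2)

/-- The second derivative `Φ''(t) = -t e^{-t²/2}/√(2π)` of the standard normal cdf. -/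
def stdNormalCDF'' (t : ℝ) : ℝ := -t * Real.exp (-t ^ 2 / 2) / Real.sqrt (2 * Real.pi)

/-- Cartan's isoparametric cubic form on `ℝ⁵`. -/
def cartanCubic (y : EuclideanSpace ℝ (Fin 5)) : ℝ :=
  y 0 ^ 3 - 3 * y 0 * (y 1 ^ 2 + y 2 ^ 2) + 3 / 2 * y 0 * (y 3 ^ 2 + y 4 ^ 2)
    + 3 * √3 / 2 * y 1 * (y 3 ^ 2 - y 4 ^ 2) + 3 * √3 * y 2 * y 3 * y 4

/-- The linear parametrization of traceless symmetric `3 × 3` matrices by `ℝ⁵` for which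
`cartanCubic` is four times the determinant. -/
def tracelessSymm (y : EuclideanSpace ℝ (Fin 5)) : Matrix (Fin 3) (Fin 3) ℝ :=
  !![-y 0 / 2 + √3 / 2 * y 1, √3 / 2 * y 2, √3 / 2 * y 3;
    √3 / 2 * y 2, -y 0 / 2 - √3 / 2 * y 1, √3 / 2 * y 4;
    √3 / 2 * y 3, √3 / 2 * y 4, y 0]

lemma det_tracelessSymm (y : EuclideanSpace ℝ (Fin 5)) :
    (tracelessSymm y).det = cartanCubic y / 4 := by
  have h : √3 ^ 2 = 3 := Real.sq_sqrt (by norm_num)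
  have h3 : √3 ^ 3 = 3 * √3 := by rw [pow_succ, h]
  simp only [tracelessSymm, cartanCubic, det_fin_three, Matrix.of_apply, Matrix.cons_val]
  ring_nf
  simp only [h, h3]
  ring

lemma trace_tracelessSymm (y : EuclideanSpace ℝ (Fin 5)) : (tracelessSymm y).trace = 0 := by
  simp only [tracelessSymm, trace_fin_three, Matrix.of_apply, Matrix.cons_val]
  ring

lemma trace_tracelessSymm_mul_self (y : EuclideanSpace ℝ (Fin 5)) :
    (tracelessSymm y * tracelessSymm y).trace = 3 / 2 * ‖y‖ ^ 2 := by
  have h : √3 ^ 2 = 3 := Real.sq_sqrt (by norm_num)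
  rw [EuclideanSpace.real_norm_sq_eq]
  simp only [tracelessSymm, trace_fin_three, Matrix.mul_apply, Fin.sum_univ_three,
    Matrix.of_apply, Matrix.cons_val, Fin.sum_univ_five]
  ring_nf
  simp only [h]
  ring

lemma isHermitian_tracelessSymm (y : EuclideanSpace ℝ (Fin 5)) :
    (tracelessSymm y).IsHermitian := by
  ext i j
  fin_cases i <;> fin_cases j <;> simp [tracelessSymm]

/-- Spectral theorem for real symmetric matrices, in terms of the invariants we use. -/
lemma exists_spectral_invariants {A : Matrix (Fin 3) (Fin 3) ℝ} (hA : A.IsHermitian) :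
    ∃ d : Fin 3 → ℝ, d 0 + d 1 + d 2 = A.trace ∧ d 0 ^ 2 + d 1 ^ 2 + d 2 ^ 2 = (A * A).trace ∧
      d 0 * d 1 * d 2 = A.det ∧
      ∀ a : ℝ, (∀ v : Fin 3 → ℝ, ∑ i, v i ^ 2 = 1 → |v ⬝ᵥ A *ᵥ v| ≤ a) ↔ ∀ i, |d i| ≤ a := by
  set Q : Matrix (Fin 3) (Fin 3) ℝ := (hA.eigenvectorUnitary : Matrix (Fin 3) (Fin 3) ℝ) with hQ
  have hQ1 : Qᵀ * Q = 1 := by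
    simpa [star_eq_conjTranspose] using Unitary.coe_star_mul_self hA.eigenvectorUnitary
  have hQ2 : Q * Qᵀ = 1 := by
    simpa [star_eq_conjTranspose] using Unitary.coe_mul_star_self hA.eigenvectorUnitary
  have hspec : A = Q * diagonal hA.eigenvalues * Qᵀ := by
    have := hA.spectral_theorem
    simpa [Unitary.conjStarAlgAut_apply, star_eq_conjTranspose, Function.comp_def] using this
  generalize hA.eigenvalues = d at hspec
  refine ⟨d, ?_, ?_, ?_, ?_⟩
  · rw [hspec, Matrix.trace_mul_comm, ← Matrix.mul_assoc, hQ1]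
    simp [Fin.sum_univ_three]
  · have : A * A = Q * (diagonal d * diagonal d) * Qᵀ := by
      rw [hspec]
      calc Q * diagonal d * Qᵀ * (Q * diagonal d * Qᵀ)
          = Q * diagonal d * (Qᵀ * Q) * diagonal d * Qᵀ := by simp only [Matrix.mul_assoc]
        _ = _ := by rw [hQ1]; simp only [Matrix.mul_assoc, Matrix.mul_one]
    rw [this, Matrix.trace_mul_comm, ← Matrix.mul_assoc, hQ1]
    simp [Fin.sum_univ_three, sq]
  · have : Q.det * Qᵀ.det = 1 := by rw [← det_mul, hQ2, det_one]
    rw [hspec, det_mul, det_mul, mul_right_comm Q.det, this]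
    simp [Fin.prod_univ_three]
  · intro a
    have hform : ∀ v : Fin 3 → ℝ, v ⬝ᵥ A *ᵥ v = ∑ i, d i * (Qᵀ *ᵥ v) i ^ 2 := by
      intro v
      rw [hspec, ← Matrix.mulVec_mulVec, ← Matrix.mulVec_mulVec, dotProduct_mulVec,
        ← Matrix.mulVec_transpose]
      simp only [dotProduct, mulVec_diagonal]
      exact Finset.sum_congr rfl fun i _ => by ring
    have hnorm : ∀ v : Fin 3 → ℝ, ∑ i, (Qᵀ *ᵥ v) i ^ 2 = ∑ i, v i ^ 2 := by
      intro v
      have h1 : (Qᵀ *ᵥ v) ⬝ᵥ (Qᵀ *ᵥ v) = v ⬝ᵥ v := by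
        rw [dotProduct_mulVec, ← Matrix.mulVec_transpose, transpose_transpose,
          Matrix.mulVec_mulVec, hQ2, Matrix.one_mulVec]
      simpa [dotProduct, sq] using h1
    constructor
    · intro h i
      have hv : Qᵀ *ᵥ (Q *ᵥ Pi.single i 1) = Pi.single i (1 : ℝ) := by
        rw [Matrix.mulVec_mulVec, hQ1, Matrix.one_mulVec]
      have h1 := h (Q *ᵥ Pi.single i 1) (by
        rw [← hnorm, hv]
        simp [Pi.single_apply])
      rw [hform, hv] at h1
      simpa [Pi.single_apply] using h1
    · intro h v hv
      rw [hform]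
      calc |∑ i, d i * (Qᵀ *ᵥ v) i ^ 2| ≤ ∑ i, |d i * (Qᵀ *ᵥ v) i ^ 2| :=
            Finset.abs_sum_le_sum_abs _ _
        _ ≤ ∑ i, a * (Qᵀ *ᵥ v) i ^ 2 := by
            refine Finset.sum_le_sum fun i _ => ?_
            rw [abs_mul, abs_of_nonneg (sq_nonneg ((Qᵀ *ᵥ v) i))]
            exact mul_le_mul_of_nonneg_right (h i) (sq_nonneg _)
        _ = a := by rw [← Finset.mul_sum, hnorm, hv, mul_one]

lemma abs_cartanCubic_le (y : EuclideanSpace ℝ (Fin 5)) : |cartanCubic y| ≤ ‖y‖ ^ 3 := by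
  obtain ⟨d, h1, h2, h3, -⟩ := exists_spectral_invariants (isHermitian_tracelessSymm y)
  rw [trace_tracelessSymm] at h1
  rw [trace_tracelessSymm_mul_self] at h2
  rw [det_tracelessSymm] at h3
  refine abs_le_of_sq_le_sq ?_ (by positivity)
  have hF : cartanCubic y = 4 * (d 0 * d 1 * d 2) := by rw [h3]; ring
  have hr : ‖y‖ ^ 2 = 2 / 3 * (d 0 ^ 2 + d 1 ^ 2 + d 2 ^ 2) := by rw [h2]; ring
  have hd : d 2 = -d 0 - d 1 := by linarith
  have : (‖y‖ ^ 3) ^ 2 = (‖y‖ ^ 2) ^ 3 := by ring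
  rw [this, hr, hF, hd]
  nlinarith [sq_nonneg ((d 0 - d 1) * (2 * d 0 + d 1) * (d 0 + 2 * d 1))]

lemma abs_le_iff_cubic {a x y z : ℝ} (ha : 0 < a) (h : x + y + z = 0) :
    (|x| ≤ a ∧ |y| ≤ a ∧ |z| ≤ a) ↔
      |x * y * z| ≤ a ^ 3 - a * (x ^ 2 + y ^ 2 + z ^ 2) / 2 := by
  have hz : z = -x - y := by linarith
  have e1 : a ^ 3 - a * (x ^ 2 + y ^ 2 + z ^ 2) / 2 - x * y * z = (a - x) * (a - y) * (a - z) := by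
    subst hz; ring
  have e2 : a ^ 3 - a * (x ^ 2 + y ^ 2 + z ^ 2) / 2 + x * y * z = (a + x) * (a + y) * (a + z) := by
    subst hz; ring
  have hiff : |x * y * z| ≤ a ^ 3 - a * (x ^ 2 + y ^ 2 + z ^ 2) / 2 ↔
      0 ≤ (a - x) * (a - y) * (a - z) ∧ 0 ≤ (a + x) * (a + y) * (a + z) := by
    rw [← e1, ← e2, abs_le]
    constructor <;> rintro ⟨_, _⟩ <;> constructor <;> linarith
  rw [hiff]
  simp only [abs_le]
  constructor
  · rintro ⟨⟨_, _⟩, ⟨_, _⟩, _, _⟩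
    constructor <;> apply mul_nonneg <;> first | (apply mul_nonneg <;> linarith) | linarith
  · rintro ⟨p, q⟩
    have key : ∀ x y z : ℝ, x + y + z = 0 → 0 ≤ (a - x) * (a - y) * (a - z) →
        0 ≤ (a + x) * (a + y) * (a + z) → x ≤ a := by
      intro x y z h p q
      by_contra! hx
      have p' : (a - y) * (a - z) ≤ 0 := by
        by_contra! hh
        nlinarith
      rcases le_or_gt y a with hy | hy
      · rcases le_or_gt z a with hz | hz
        · have : (a - y) * (a - z) = 0 := le_antisymm p' (mul_nonneg (by linarith) (by linarith))
          rcases mul_eq_zero.1 this with h0 | h0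
          · have : (a + x) * (a + y) > 0 := mul_pos (by linarith) (by linarith)
            nlinarith
          · have : (a + x) * (a + z) > 0 := mul_pos (by linarith) (by linarith)
            nlinarith
        · have : (a + x) * (a + z) > 0 := mul_pos (by linarith) (by linarith)
          nlinarith
      · have : (a + x) * (a + y) > 0 := mul_pos (by linarith) (by linarith)
        nlinarith
    have key' : ∀ x y z : ℝ, x + y + z = 0 → 0 ≤ (a - x) * (a - y) * (a - z) →
        0 ≤ (a + x) * (a + y) * (a + z) → -a ≤ x ∧ x ≤ a := by
      intro x y z h p q
      refine ⟨?_, key x y z h p q⟩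
      have := key (-x) (-y) (-z) (by linarith) (by convert q using 1; ring)
        (by convert p using 1; ring)
      linarith
    exact ⟨key' x y z h p q, key' y z x (by linarith) (by convert p using 1; ring)
      (by convert q using 1; ring), key' z x y (by linarith) (by convert p using 1; ring)
      (by convert q using 1; ring)⟩

lemma forall_abs_form_le_iff {a : ℝ} (ha : 0 < a) (y : EuclideanSpace ℝ (Fin 5)) :
    (∀ v : Fin 3 → ℝ, ∑ i, v i ^ 2 = 1 → |v ⬝ᵥ tracelessSymm y *ᵥ v| ≤ a) ↔
      |cartanCubic y| ≤ 4 * a ^ 3 - 3 * a * ‖y‖ ^ 2 := by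
  obtain ⟨d, h1, h2, h3, h4⟩ := exists_spectral_invariants (isHermitian_tracelessSymm y)
  rw [trace_tracelessSymm] at h1
  rw [trace_tracelessSymm_mul_self] at h2
  rw [det_tracelessSymm] at h3
  rw [h4, Fin.forall_fin_succ, Fin.forall_fin_two]
  have hF : cartanCubic y = 4 * (d 0 * d 1 * d 2) := by rw [h3]; ring
  have hr : ‖y‖ ^ 2 = 2 / 3 * (d 0 ^ 2 + d 1 ^ 2 + d 2 ^ 2) := by rw [h2]; ring
  rw [hF, hr, abs_mul, abs_of_pos (by norm_num : (0 : ℝ) < 4)]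
  refine (abs_le_iff_cubic ha h1).trans ?_
  constructor <;> intro h <;> linarith

/-! ### Polar coordinates on `ℝ⁵` -/

lemma measurePreserving_polar :
    MeasurePreserving (homeomorphUnitSphereProd (EuclideanSpace ℝ (Fin 5)))
      ((volume : Measure (EuclideanSpace ℝ (Fin 5))).comap (↑))
      ((volume : Measure (EuclideanSpace ℝ (Fin 5))).toSphere.prod
        (Measure.volumeIoiPow 4)) := by
  have := (volume : Measure (EuclideanSpace ℝ (Fin 5))).measurePreserving_homeomorphUnitSphereProd
  simpa [finrank_euclideanSpace] using this

lemma integral_polar (f : EuclideanSpace ℝ (Fin 5) → ℝ) :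
    ∫ y, f y = ∫ p, f ((p.2 : ℝ) • (p.1 : EuclideanSpace ℝ (Fin 5)))
      ∂((volume : Measure (EuclideanSpace ℝ (Fin 5))).toSphere.prod
        (Measure.volumeIoiPow 4)) := by
  have h := measurePreserving_polar.integral_comp (Homeomorph.measurableEmbedding _)
    (fun p => f ((p.2 : ℝ) • (p.1 : EuclideanSpace ℝ (Fin 5))))
  have h' : ∫ y, f y = ∫ y : ({0}ᶜ : Set (EuclideanSpace ℝ (Fin 5))), f y
      ∂((volume : Measure (EuclideanSpace ℝ (Fin 5))).comap (↑)) := by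
    rw [integral_subtype_comap (measurableSet_singleton _).compl f, restrict_compl_singleton]
  rw [← h, h']
  refine integral_congr_ae (.of_forall fun y => ?_)
  have hy : (y : EuclideanSpace ℝ (Fin 5)) ≠ 0 := y.2
  have : ‖(y : EuclideanSpace ℝ (Fin 5))‖ ≠ 0 := norm_ne_zero_iff.2 hy
  simp [smul_smul, this]

lemma integrable_polar (f : EuclideanSpace ℝ (Fin 5) → ℝ) :
    Integrable f ↔ Integrable (fun p : Metric.sphere (0 : EuclideanSpace ℝ (Fin 5)) 1 × Set.Ioi 0 =>
      f ((p.2 : ℝ) • (p.1 : EuclideanSpace ℝ (Fin 5))))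
      ((volume : Measure (EuclideanSpace ℝ (Fin 5))).toSphere.prod
        (Measure.volumeIoiPow 4)) := by
  have h := measurePreserving_polar.integrable_comp_emb (Homeomorph.measurableEmbedding _)
    (g := fun p => f ((p.2 : ℝ) • (p.1 : EuclideanSpace ℝ (Fin 5))))
  have h' : Integrable f ↔ IntegrableOn f ({0}ᶜ : Set (EuclideanSpace ℝ (Fin 5))) := by
    rw [IntegrableOn, restrict_compl_singleton]
  rw [← h, h', integrableOn_iff_comap_subtypeVal (by measurability)]
  refine integrable_congr (.of_forall fun y => ?_)
  have hy : (y : EuclideanSpace ℝ (Fin 5)) ≠ 0 := y.2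
  have : ‖(y : EuclideanSpace ℝ (Fin 5))‖ ≠ 0 := norm_ne_zero_iff.2 hy
  simp [smul_smul, this]

lemma integral_volumeIoiPow (n : ℕ) (g : ℝ → ℝ) :
    ∫ r : Set.Ioi (0 : ℝ), g r ∂(Measure.volumeIoiPow n) =
      ∫ r in Set.Ioi (0 : ℝ), r ^ n * g r := by
  simp only [Measure.volumeIoiPow, ENNReal.ofReal]
  rw [integral_withDensity_eq_integral_smul (by fun_prop),
    integral_subtype_comap measurableSet_Ioi fun r : ℝ => Real.toNNReal (r ^ n) • g r]
  refine setIntegral_congr_fun measurableSet_Ioi fun r hr => ?_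
  have : (0 : ℝ) < r := hr
  simp [NNReal.smul_def, this.le]

lemma integrable_volumeIoiPow (n : ℕ) (g : ℝ → ℝ) :
    Integrable (fun r : Set.Ioi (0 : ℝ) => g r) (Measure.volumeIoiPow n) ↔
      IntegrableOn (fun r => r ^ n * g r) (Set.Ioi 0) := by
  rw [integrableOn_iff_comap_subtypeVal measurableSet_Ioi, Measure.volumeIoiPow,
    integrable_withDensity_iff_integrable_smul' (by fun_prop) (by simp)]
  refine integrable_congr (.of_forall fun r => ?_)
  have : (0 : ℝ) < r := r.2
  simp [ENNReal.toReal_ofReal, this.le]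

/-! ### Radial Gaussian moments -/

lemma integrableOn_pow_mul_gaussian (n : ℕ) :
    IntegrableOn (fun r : ℝ => r ^ n * rexp (-r ^ 2 / 2)) (Set.Ioi 0) := by
  have := (integrable_rpow_mul_exp_neg_mul_sq (b := 1 / 2) (by norm_num) (s := n)
    (by have : (0 : ℝ) ≤ n := n.cast_nonneg
        linarith)).integrableOn (s := Set.Ioi 0)
  refine this.congr_fun (fun r _ => ?_) measurableSet_Ioi
  simp only [rpow_natCast]
  congr 2; ring

lemma integral_pow_mul_gaussian_add_two (n : ℕ) :
    ∫ r in Set.Ioi (0 : ℝ), r ^ (n + 2) * rexp (-r ^ 2 / 2) =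
      (n + 1) * ∫ r in Set.Ioi (0 : ℝ), r ^ n * rexp (-r ^ 2 / 2) := by
  have h : ∀ m : ℕ, ∫ r in Set.Ioi (0 : ℝ), r ^ m * rexp (-r ^ 2 / 2) =
      (1 / 2 : ℝ) ^ (-((m : ℝ) + 1) / 2) * (1 / 2) * Real.Gamma (((m : ℝ) + 1) / 2) := by
    intro m
    rw [← integral_rpow_mul_exp_neg_mul_rpow (by norm_num : (0 : ℝ) < 2)
      (by have : (0 : ℝ) ≤ m := m.cast_nonneg
          linarith) (by norm_num : (0 : ℝ) < 1 / 2)]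
    refine setIntegral_congr_fun measurableSet_Ioi fun r _ => ?_
    simp only [rpow_natCast, rpow_ofNat]
    congr 2; ring
  rw [h, h]
  have e1 : (((n + 2 : ℕ) : ℝ) + 1) / 2 = ((n : ℝ) + 1) / 2 + 1 := by push_cast; ring
  have e2 : -(((n + 2 : ℕ) : ℝ) + 1) / 2 = -((n : ℝ) + 1) / 2 - 1 := by push_cast; ring
  rw [e1, e2, Real.Gamma_add_one (by positivity), rpow_sub_one (by norm_num)]
  ring

lemma integral_pow_mul_gaussian_pos (n : ℕ) :
    0 < ∫ r in Set.Ioi (0 : ℝ), r ^ n * rexp (-r ^ 2 / 2) := by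
  rw [setIntegral_pos_iff_support_of_nonneg_ae]
  · refine lt_of_lt_of_le ?_ (measure_mono (s := Set.Ioi 0) fun r hr => ⟨?_, hr⟩)
    · simp
    · have : (0 : ℝ) < r := hr
      exact (by positivity : r ^ n * rexp (-r ^ 2 / 2) ≠ 0)
  · filter_upwards [ae_restrict_mem measurableSet_Ioi] with r hr
    have : (0 : ℝ) < r := hr
    positivity
  · exact integrableOn_pow_mul_gaussian n

/-! ### Homogeneous functions against the Gaussian weight -/

lemma polar_homogeneous_gaussian {f : EuclideanSpace ℝ (Fin 5) → ℝ} {N : ℕ}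
    (hf : ∀ (r : ℝ) y, f (r • y) = r ^ N * f y)
    (p : Metric.sphere (0 : EuclideanSpace ℝ (Fin 5)) 1 × Set.Ioi (0 : ℝ)) :
    f ((p.2 : ℝ) • (p.1 : EuclideanSpace ℝ (Fin 5))) *
      rexp (-‖(p.2 : ℝ) • (p.1 : EuclideanSpace ℝ (Fin 5))‖ ^ 2 / 2) =
      f p.1 * ((p.2 : ℝ) ^ N * rexp (-(p.2 : ℝ) ^ 2 / 2)) := by
  have h1 : ‖(p.1 : EuclideanSpace ℝ (Fin 5))‖ = 1 := by simp
  rw [hf, norm_smul, h1, mul_one, Real.norm_eq_abs, sq_abs]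
  ring

lemma integral_homogeneous_gaussian {f : EuclideanSpace ℝ (Fin 5) → ℝ} {N : ℕ}
    (hf : ∀ (r : ℝ) y, f (r • y) = r ^ N * f y) :
    ∫ y, f y * rexp (-‖y‖ ^ 2 / 2) =
      (∫ ω, f ω ∂(volume : Measure (EuclideanSpace ℝ (Fin 5))).toSphere) *
        ∫ r in Set.Ioi (0 : ℝ), r ^ (N + 4) * rexp (-r ^ 2 / 2) := by
  rw [integral_polar]
  simp only [polar_homogeneous_gaussian hf]
  rw [integral_prod_mul (fun ω : Metric.sphere (0 : EuclideanSpace ℝ (Fin 5)) 1 => f ω)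
    (fun r : Set.Ioi (0 : ℝ) => (r : ℝ) ^ N * rexp (-(r : ℝ) ^ 2 / 2)),
    integral_volumeIoiPow 4 (fun r => r ^ N * rexp (-r ^ 2 / 2))]
  congr 1
  refine setIntegral_congr_fun measurableSet_Ioi fun r _ => ?_
  ring

lemma integrable_homogeneous_gaussian {f : EuclideanSpace ℝ (Fin 5) → ℝ} {N : ℕ}
    (hc : Continuous f) (hf : ∀ (r : ℝ) y, f (r • y) = r ^ N * f y) :
    Integrable fun y => f y * rexp (-‖y‖ ^ 2 / 2) := by
  rw [integrable_polar]
  simp only [polar_homogeneous_gaussian hf]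
  refine Integrable.mul_prod
    (f := fun ω : Metric.sphere (0 : EuclideanSpace ℝ (Fin 5)) 1 => f ω)
    (g := fun r : Set.Ioi (0 : ℝ) => (r : ℝ) ^ N * rexp (-(r : ℝ) ^ 2 / 2)) ?_ ?_
  · exact (hc.comp continuous_subtype_val).integrable_of_hasCompactSupport
      (HasCompactSupport.of_compactSpace _)
  · refine (integrable_volumeIoiPow 4 (fun r => r ^ N * rexp (-r ^ 2 / 2))).2 ?_
    refine (integrableOn_pow_mul_gaussian (N + 4)).congr_fun (fun r _ => ?_) measurableSet_Ioi
    ring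

/-! ### Cartan's cubic is isoparametric -/

/-- The gradient of `cartanCubic`. -/
def cartanGrad (i : Fin 5) (y : EuclideanSpace ℝ (Fin 5)) : ℝ :=
  ![3 * y 0 ^ 2 - 3 * (y 1 ^ 2 + y 2 ^ 2) + 3 / 2 * (y 3 ^ 2 + y 4 ^ 2),
    -6 * y 0 * y 1 + 3 * √3 / 2 * (y 3 ^ 2 - y 4 ^ 2),
    -6 * y 0 * y 2 + 3 * √3 * y 3 * y 4,
    3 * y 0 * y 3 + 3 * √3 * y 1 * y 3 + 3 * √3 * y 2 * y 4,
    3 * y 0 * y 4 - 3 * √3 * y 1 * y 4 + 3 * √3 * y 2 * y 3] i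

/-- The diagonal of the Hessian of `cartanCubic`. -/
def cartanHess (i : Fin 5) (y : EuclideanSpace ℝ (Fin 5)) : ℝ :=
  ![6 * y 0, -6 * y 0, -6 * y 0, 3 * y 0 + 3 * √3 * y 1, 3 * y 0 - 3 * √3 * y 1] i

lemma hasDerivAt_zero_of_eq {f q : ℝ → ℝ} {c f' : ℝ} (hq : Differentiable ℝ q)
    (h : ∀ t, f t = c + f' * t + t ^ 2 * q t) : HasDerivAt f f' 0 := by
  have : f = fun t => c + f' * t + t ^ 2 * q t := funext h
  rw [this]
  have h1 : HasDerivAt (fun t : ℝ => t ^ 2 * q t) (2 * 0 * q 0 + 0 ^ 2 * deriv q 0) 0 := by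
    simpa using (hasDerivAt_pow 2 (0 : ℝ)).fun_mul (hq 0).hasDerivAt
  have h2 : HasDerivAt (fun t : ℝ => c + f' * t) f' 0 := by
    simpa using ((hasDerivAt_id (0 : ℝ)).const_mul f').const_add c
  simpa using h2.fun_add h1

lemma hasLineDerivAt_cartanCubic (i : Fin 5) (y : EuclideanSpace ℝ (Fin 5)) :
    HasLineDerivAt ℝ cartanCubic (cartanGrad i y) y (EuclideanSpace.single i 1) := by
  refine hasDerivAt_zero_of_eq (c := cartanCubic y)
    (q := fun t => cartanHess i y / 2 + t * (if i = 0 then 1 else 0)) (by fun_prop) fun t => ?_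
  fin_cases i <;>
  · simp [cartanCubic, cartanGrad, cartanHess]
    ring

lemma hasLineDerivAt_cartanGrad (i : Fin 5) (y : EuclideanSpace ℝ (Fin 5)) :
    HasLineDerivAt ℝ (cartanGrad i) (cartanHess i y) y (EuclideanSpace.single i 1) := by
  refine hasDerivAt_zero_of_eq (c := cartanGrad i y)
    (q := fun _ => if i = 0 then 3 else 0) (by fun_prop) fun t => ?_
  fin_cases i <;>
  · simp [cartanGrad, cartanHess]
    ring

lemma sum_mul_cartanGrad (y : EuclideanSpace ℝ (Fin 5)) :
    ∑ i, y i * cartanGrad i y = 3 * cartanCubic y := by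
  simp only [Fin.sum_univ_five, cartanGrad, cartanCubic, Matrix.cons_val]
  ring

lemma sum_cartanGrad_sq (y : EuclideanSpace ℝ (Fin 5)) :
    ∑ i, cartanGrad i y ^ 2 = 9 * ‖y‖ ^ 4 := by
  have h : √3 ^ 2 = 3 := Real.sq_sqrt (by norm_num)
  have hn : ‖y‖ ^ 4 = (‖y‖ ^ 2) ^ 2 := by ring
  rw [hn, EuclideanSpace.real_norm_sq_eq]
  simp only [Fin.sum_univ_five, cartanGrad, Matrix.cons_val]
  ring_nf
  simp only [h]
  ring

lemma sum_cartanHess (y : EuclideanSpace ℝ (Fin 5)) : ∑ i, cartanHess i y = 0 := by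
  simp only [Fin.sum_univ_five, cartanHess, Matrix.cons_val]
  ring

@[fun_prop]
lemma continuous_cartanCubic : Continuous cartanCubic := by
  unfold cartanCubic; fun_prop

@[fun_prop]
lemma continuous_cartanGrad (i : Fin 5) : Continuous (cartanGrad i) := by
  unfold cartanGrad
  fin_cases i <;> simp only [Fin.reduceFinMk, Matrix.cons_val, Fin.zero_eta, Fin.mk_one] <;> fun_prop

@[fun_prop]
lemma continuous_cartanHess (i : Fin 5) : Continuous (cartanHess i) := by
  unfold cartanHess
  fin_cases i <;> simp only [Fin.reduceFinMk, Matrix.cons_val, Fin.zero_eta, Fin.mk_one] <;> fun_prop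

lemma cartanCubic_smul (r : ℝ) (y : EuclideanSpace ℝ (Fin 5)) :
    cartanCubic (r • y) = r ^ 3 * cartanCubic y := by
  simp only [cartanCubic, PiLp.smul_apply, smul_eq_mul]
  ring

lemma cartanGrad_smul (i : Fin 5) (r : ℝ) (y : EuclideanSpace ℝ (Fin 5)) :
    cartanGrad i (r • y) = r ^ 2 * cartanGrad i y := by
  fin_cases i <;> simp [cartanGrad] <;> ring

lemma cartanHess_smul (i : Fin 5) (r : ℝ) (y : EuclideanSpace ℝ (Fin 5)) :
    cartanHess i (r • y) = r * cartanHess i y := by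
  fin_cases i <;> simp [cartanHess] <;> ring

lemma hasLineDerivAt_gaussianWeight (i : Fin 5) (y : EuclideanSpace ℝ (Fin 5)) :
    HasLineDerivAt ℝ (fun y : EuclideanSpace ℝ (Fin 5) => rexp (-‖y‖ ^ 2 / 2))
      (-(y i * rexp (-‖y‖ ^ 2 / 2))) y (EuclideanSpace.single i 1) := by
  have h : HasDerivAt (fun t : ℝ => ‖y + t • EuclideanSpace.single i (1 : ℝ)‖ ^ 2) (2 * y i) 0 := by
    refine hasDerivAt_zero_of_eq (c := ‖y‖ ^ 2) (q := fun _ => 1) (by fun_prop) fun t => ?_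
    rw [norm_add_sq_real, norm_smul, inner_smul_right, EuclideanSpace.inner_single_right]
    simp
    ring
  have h2 := (h.fun_neg.div_const 2).exp
  simp only [zero_smul, add_zero] at h2
  refine h2.congr_deriv ?_
  ring

lemma integrable_cartan_power (k N : ℕ) {f : EuclideanSpace ℝ (Fin 5) → ℝ} (hc : Continuous f)
    (hf : ∀ (r : ℝ) y, f (r • y) = r ^ N * f y) :
    Integrable fun y => cartanCubic y ^ k * f y * rexp (-‖y‖ ^ 2 / 2) := by
  refine integrable_homogeneous_gaussian (f := fun y => cartanCubic y ^ k * f y)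
    (N := 3 * k + N) (by fun_prop) fun r y => ?_
  rw [cartanCubic_smul, hf]
  ring

/-- Gaussian integration by parts for the vector field `F ^ k ∇F`, one coordinate at a time. -/
lemma integral_coord_mul_cartan (k : ℕ) (i : Fin 5) :
    ∫ y, cartanCubic y ^ k * (y i * cartanGrad i y) * rexp (-‖y‖ ^ 2 / 2) =
      (∫ y, k * (cartanCubic y ^ (k - 1) * cartanGrad i y ^ 2 * rexp (-‖y‖ ^ 2 / 2))) +
      ∫ y, cartanCubic y ^ k * cartanHess i y * rexp (-‖y‖ ^ 2 / 2) := by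
  have i1 : Integrable fun y => cartanCubic y ^ k * (y i * cartanGrad i y) *
      rexp (-‖y‖ ^ 2 / 2) :=
    integrable_cartan_power k 3 (by fun_prop) fun r y => by
      rw [cartanGrad_smul, PiLp.smul_apply, smul_eq_mul]; ring
  have i2 : Integrable fun y => (k : ℝ) * (cartanCubic y ^ (k - 1) * cartanGrad i y ^ 2 *
      rexp (-‖y‖ ^ 2 / 2)) :=
    (integrable_cartan_power (k - 1) 4 (by fun_prop) fun r y => by
      rw [cartanGrad_smul]; ring).const_mul _
  have i3 : Integrable fun y => cartanCubic y ^ k * cartanHess i y * rexp (-‖y‖ ^ 2 / 2) :=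
    integrable_cartan_power k 1 (by fun_prop) fun r y => by rw [cartanHess_smul, pow_one]
  have i4 : Integrable fun y => cartanCubic y ^ k * cartanGrad i y * rexp (-‖y‖ ^ 2 / 2) :=
    integrable_cartan_power k 2 (by fun_prop) fun r y => by rw [cartanGrad_smul]
  have hderiv : ∀ y, HasLineDerivAt ℝ (fun y => cartanCubic y ^ k * cartanGrad i y)
      (k * cartanCubic y ^ (k - 1) * cartanGrad i y ^ 2 + cartanCubic y ^ k * cartanHess i y) y
      (EuclideanSpace.single i 1) := by
    intro y
    have hF : HasDerivAt (fun t : ℝ => cartanCubic (y + t • EuclideanSpace.single i 1))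
      (cartanGrad i y) 0 := hasLineDerivAt_cartanCubic i y
    have hG : HasDerivAt (fun t : ℝ => cartanGrad i (y + t • EuclideanSpace.single i 1))
      (cartanHess i y) 0 := hasLineDerivAt_cartanGrad i y
    have h := (hF.fun_pow k).fun_mul hG
    simp only [zero_smul, add_zero] at h
    refine h.congr_deriv ?_
    ring
  have key := integral_bilinear_hasLineDerivAt_right_eq_neg_left_of_integrable
    (μ := (volume : Measure (EuclideanSpace ℝ (Fin 5)))) (B := ContinuousLinearMap.mul ℝ ℝ)
    (f := fun y => cartanCubic y ^ k * cartanGrad i y) (g := fun y => rexp (-‖y‖ ^ 2 / 2))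
    (f' := fun y => k * cartanCubic y ^ (k - 1) * cartanGrad i y ^ 2 +
      cartanCubic y ^ k * cartanHess i y)
    (g' := fun y => -(y i * rexp (-‖y‖ ^ 2 / 2))) (v := EuclideanSpace.single i 1)
    ((i2.add i3).congr (.of_forall fun y => by
      simp only [Pi.add_apply, ContinuousLinearMap.mul_apply']; ring))
    (i1.neg.congr (.of_forall fun y => by
      simp only [Pi.neg_apply, ContinuousLinearMap.mul_apply']; ring))
    i4 (fun y _ => hderiv y) (fun y _ => hasLineDerivAt_gaussianWeight i y)
  rw [← integral_add i2 i3, ← neg_inj, ← integral_neg]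
  convert key using 1
  · refine integral_congr_ae (.of_forall fun y => ?_)
    simp only [ContinuousLinearMap.mul_apply']
    ring
  · congr 1
    refine integral_congr_ae (.of_forall fun y => ?_)
    simp only [ContinuousLinearMap.mul_apply']
    ring

lemma integral_cartanCubic_pow_succ_gaussian (k : ℕ) :
    3 * ∫ y, cartanCubic y ^ (k + 1) * rexp (-‖y‖ ^ 2 / 2) =
      9 * (k * ∫ y, cartanCubic y ^ (k - 1) * ‖y‖ ^ 4 * rexp (-‖y‖ ^ 2 / 2)) := by
  have h := Finset.sum_congr (rfl : (Finset.univ : Finset (Fin 5)) = Finset.univ)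
    fun i _ => integral_coord_mul_cartan k i
  rw [Finset.sum_add_distrib, ← integral_finsetSum, ← integral_finsetSum, ← integral_finsetSum] at h
  · have e1 : ∀ y : EuclideanSpace ℝ (Fin 5),
        ∑ i, cartanCubic y ^ k * (y i * cartanGrad i y) * rexp (-‖y‖ ^ 2 / 2) =
          3 * (cartanCubic y ^ (k + 1) * rexp (-‖y‖ ^ 2 / 2)) := by
      intro y
      rw [← Finset.sum_mul, ← Finset.mul_sum, sum_mul_cartanGrad]
      ring
    have e2 : ∀ y : EuclideanSpace ℝ (Fin 5),
        ∑ i, (k : ℝ) * (cartanCubic y ^ (k - 1) * cartanGrad i y ^ 2 * rexp (-‖y‖ ^ 2 / 2)) =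
          9 * (k * (cartanCubic y ^ (k - 1) * ‖y‖ ^ 4 * rexp (-‖y‖ ^ 2 / 2))) := by
      intro y
      rw [← Finset.mul_sum, ← Finset.sum_mul, ← Finset.mul_sum, sum_cartanGrad_sq]
      ring
    have e3 : ∀ y : EuclideanSpace ℝ (Fin 5),
        ∑ i, cartanCubic y ^ k * cartanHess i y * rexp (-‖y‖ ^ 2 / 2) = 0 := by
      intro y
      rw [← Finset.sum_mul, ← Finset.mul_sum, sum_cartanHess]
      ring
    simp only [e1, e2, e3, integral_const_mul, integral_zero, add_zero] at h
    exact h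
  · exact fun i _ => integrable_cartan_power k 1 (by fun_prop) fun r y => by
      rw [cartanHess_smul, pow_one]
  · exact fun i _ => (integrable_cartan_power (k - 1) 4 (by fun_prop) fun r y => by
      rw [cartanGrad_smul]; ring).const_mul _
  · exact fun i _ => integrable_cartan_power k 3 (by fun_prop) fun r y => by
      rw [cartanGrad_smul, PiLp.smul_apply, smul_eq_mul]; ring

/-! ### The law of Cartan's cubic on the sphere -/

/-- The push-forward of the surface measure of `S⁴` under `cartanCubic`. -/
def cartanLaw : Measure ℝ :=
  (volume : Measure (EuclideanSpace ℝ (Fin 5))).toSphere.map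
    fun ω : Metric.sphere (0 : EuclideanSpace ℝ (Fin 5)) 1 => cartanCubic ω

instance : IsFiniteMeasure cartanLaw := by unfold cartanLaw; infer_instance

lemma measurable_cartanCubic_sphere :
    Measurable fun ω : Metric.sphere (0 : EuclideanSpace ℝ (Fin 5)) 1 => cartanCubic ω :=
  (continuous_cartanCubic.comp continuous_subtype_val).measurable

lemma integral_cartanLaw_pow (k : ℕ) :
    ∫ u, u ^ k ∂cartanLaw = ∫ ω, cartanCubic ω ^ k
      ∂(volume : Measure (EuclideanSpace ℝ (Fin 5))).toSphere :=
  integral_map measurable_cartanCubic_sphere.aemeasurable (by fun_prop)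

lemma integral_cartanLaw_pow_gaussian (k N : ℕ) :
    ∫ y, cartanCubic y ^ k * ‖y‖ ^ (2 * N) * rexp (-‖y‖ ^ 2 / 2) =
      (∫ u, u ^ k ∂cartanLaw) *
        ∫ r in Set.Ioi (0 : ℝ), r ^ (3 * k + 2 * N + 4) * rexp (-r ^ 2 / 2) := by
  rw [integral_homogeneous_gaussian (f := fun y => cartanCubic y ^ k * ‖y‖ ^ (2 * N))
    (N := 3 * k + 2 * N), integral_cartanLaw_pow]
  · congr 2
    ext ω
    simp
  · intro r y
    rw [cartanCubic_smul, norm_smul, mul_pow, mul_pow, pow_mul ‖r‖, Real.norm_eq_abs, sq_abs]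
    ring

lemma cartanLaw_moment_one : ∫ u, u ∂cartanLaw = 0 := by
  have h := integral_cartanCubic_pow_succ_gaussian 0
  have h2 := integral_cartanLaw_pow_gaussian 1 0
  have h3 := integral_pow_mul_gaussian_pos 7
  simp only [pow_one, mul_zero, pow_zero, mul_one, zero_add, Nat.cast_zero, zero_mul,
    Nat.reduceAdd, add_zero] at h h2
  rw [h2] at h
  have h4 : (∫ u, u ∂cartanLaw) * ∫ r in Set.Ioi (0 : ℝ), r ^ 7 * rexp (-r ^ 2 / 2) = 0 := by
    linarith
  exact (mul_eq_zero.1 h4).resolve_right h3.ne'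

lemma cartanLaw_moment_add_two (k : ℕ) :
    (k + 3) * ∫ u, u ^ (k + 2) ∂cartanLaw = (k + 1) * ∫ u, u ^ k ∂cartanLaw := by
  have h := integral_cartanCubic_pow_succ_gaussian (k + 1)
  have h1 := integral_cartanLaw_pow_gaussian (k + 2) 0
  have h2 := integral_cartanLaw_pow_gaussian k 2
  have h3 := integral_pow_mul_gaussian_add_two (3 * k + 8)
  have h4 := integral_pow_mul_gaussian_pos (3 * k + 8)
  simp only [mul_zero, pow_zero, mul_one, add_zero, Nat.reduceMul] at h1 h2
  rw [show k + 1 + 1 = k + 2 from rfl, Nat.add_sub_cancel, h1, h2,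
    show 3 * (k + 2) + 4 = 3 * k + 8 + 2 by ring, show 3 * k + 4 + 4 = 3 * k + 8 by ring, h3] at h
  push_cast at h
  refine mul_right_cancel₀ h4.ne' ?_
  linear_combination h / 9

lemma integral_pow_uniform (c : ℝ≥0) (k : ℕ) :
    ∫ u, u ^ k ∂(c • volume.restrict (Set.Icc (-1 : ℝ) 1)) =
      c * ((1 - (-1) ^ (k + 1)) / (k + 1)) := by
  rw [integral_smul_nnreal_measure, integral_Icc_eq_integral_Ioc,
    ← intervalIntegral.integral_of_le (by norm_num), integral_pow, one_pow, NNReal.smul_def,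
    smul_eq_mul]

lemma charFun_eq_of_moments {μ : Measure ℝ} [IsFiniteMeasure μ]
    (hμ : ∀ᵐ x ∂μ, |x| ≤ 1) (t : ℝ) :
    HasSum (fun k : ℕ => ((t * Complex.I) ^ k / (k.factorial : ℂ)) * ((∫ x, x ^ k ∂μ : ℝ) : ℂ))
      (charFun μ t) := by
  have h := hasSum_integral_of_dominated_convergence (μ := μ)
    (F := fun (k : ℕ) (x : ℝ) => (t * Complex.I) ^ k / (k.factorial : ℂ) * ((x ^ k : ℝ) : ℂ))
    (f := fun x => Complex.exp (t * x * Complex.I))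
    (fun k _ => |t| ^ k / k.factorial) (fun k => by fun_prop) (fun k => ?_)
    (.of_forall fun _ => Real.summable_pow_div_factorial |t|) (by fun_prop) (.of_forall fun x => ?_)
  · rw [charFun_apply_real]
    have e : ∀ k : ℕ, ∫ x, (t * Complex.I) ^ k / (k.factorial : ℂ) * ((x ^ k : ℝ) : ℂ) ∂μ =
        (t * Complex.I) ^ k / (k.factorial : ℂ) * ((∫ x, x ^ k ∂μ : ℝ) : ℂ) := fun k => by
      rw [integral_const_mul, integral_complex_ofReal]
    simpa only [e] using h
  · filter_upwards [hμ] with x hx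
    rw [norm_mul, norm_div, norm_pow, norm_mul]
    simp only [Complex.norm_real, Complex.norm_I, mul_one, Complex.norm_natCast, norm_pow,
      Real.norm_eq_abs, Complex.ofReal_pow]
    exact mul_le_of_le_one_right (by positivity) (pow_le_one₀ (abs_nonneg x) hx)
  · have := NormedSpace.expSeries_div_hasSum_exp (𝔸 := ℂ) (t * x * Complex.I)
    rw [← Complex.exp_eq_exp_ℂ] at this
    have e : (fun k : ℕ => (t * Complex.I) ^ k / (k.factorial : ℂ) * ((x ^ k : ℝ) : ℂ)) =
        fun k : ℕ => (t * x * Complex.I) ^ k / (k.factorial : ℂ) := by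
      funext k
      push_cast
      ring
    rwa [e]

lemma measure_ext_of_moments {μ ν : Measure ℝ} [IsFiniteMeasure μ] [IsFiniteMeasure ν]
    (hμ : ∀ᵐ x ∂μ, |x| ≤ 1) (hν : ∀ᵐ x ∂ν, |x| ≤ 1)
    (h : ∀ k : ℕ, ∫ x, x ^ k ∂μ = ∫ x, x ^ k ∂ν) : μ = ν := by
  refine Measure.ext_of_charFun (funext fun t => ?_)
  have h1 := charFun_eq_of_moments hμ t
  simp only [h] at h1
  exact h1.unique (charFun_eq_of_moments hν t)

/-- Cartan's cubic is uniformly distributed on `[-1, 1]` under the surface measure of `S⁴`. -/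
lemma cartanLaw_eq_uniform :
    ∃ c : ℝ≥0, cartanLaw = c • volume.restrict (Set.Icc (-1 : ℝ) 1) := by
  refine ⟨(cartanLaw.real Set.univ).toNNReal / 2, ?_⟩
  refine measure_ext_of_moments ?_ ?_ fun k => ?_
  · rw [cartanLaw, ae_map_iff measurable_cartanCubic_sphere.aemeasurable
      (show MeasurableSet {x : ℝ | |x| ≤ 1} from measurableSet_le (by fun_prop) (by fun_prop))]
    refine .of_forall fun ω => ?_
    have := abs_cartanCubic_le ω
    simpa using this
  · refine Measure.ae_smul_measure ?_ _
    filter_upwards [ae_restrict_mem measurableSet_Icc] with x hx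
    exact abs_le.2 hx
  · rw [integral_pow_uniform]
    have hc : (((cartanLaw.real Set.univ).toNNReal / 2 : ℝ≥0) : ℝ) =
        cartanLaw.real Set.univ / 2 := by
      rw [NNReal.coe_div, Real.coe_toNNReal _ measureReal_nonneg]; norm_num
    rw [hc]
    induction k using Nat.twoStepInduction with
    | zero => simp; ring
    | one => simp [cartanLaw_moment_one]
    | more k ih _ =>
      have hk := cartanLaw_moment_add_two k
      rw [ih] at hk
      have h1 : (k : ℝ) + 3 ≠ 0 := by positivity
      have h2 : (k : ℝ) + 1 ≠ 0 := by positivity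
      refine mul_left_cancel₀ h1 (hk.trans ?_)
      push_cast
      rw [show (k : ℝ) + 2 + 1 = k + 3 by ring]
      field_simp
      ring

/-! ### One-dimensional Gaussian integrals -/

lemma stdNormalCDF_eq (t : ℝ) :
    stdNormalCDF t = 1 / 2 + (√(2 * π))⁻¹ * ∫ u in (0 : ℝ)..t, rexp (-u ^ 2 / 2) := by
  have hi : Integrable fun u : ℝ => rexp (-u ^ 2 / 2) := by
    refine (integrable_exp_neg_mul_sq (b := 1 / 2) (by norm_num)).congr (.of_forall fun u => ?_)
    simp only; congr 1; ring
  have h0 : ∫ u in Set.Iic (0 : ℝ), rexp (-u ^ 2 / 2) = √(2 * π) / 2 := by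
    have h1 := integral_comp_neg_Iic (0 : ℝ) fun u => rexp (-u ^ 2 / 2)
    have h2 := integral_gaussian_Ioi (1 / 2)
    simp only [neg_sq, neg_zero] at h1
    rw [h1]
    convert h2 using 2
    · ext u; congr 1; ring
    · congr 1; ring
  have h3 := intervalIntegral.integral_Iic_sub_Iic (a := 0) (b := t) hi.integrableOn hi.integrableOn
  rw [stdNormalCDF, integral_const_mul, ← h3, h0]
  have : √(2 * π) ≠ 0 := by positivity
  field_simp
  ring

lemma integral_gaussian_Ioi_four :
    ∫ r in Set.Ioi (0 : ℝ), r ^ 4 * rexp (-r ^ 2 / 2) = 3 * √(2 * π) / 2 := by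
  have h1 := integral_pow_mul_gaussian_add_two 2
  have h2 := integral_pow_mul_gaussian_add_two 0
  have h3 := integral_gaussian_Ioi (1 / 2)
  have h4 : ∫ r in Set.Ioi (0 : ℝ), r ^ 0 * rexp (-r ^ 2 / 2) = √(2 * π) / 2 := by
    convert h3 using 2
    · ext u; rw [pow_zero, one_mul]; congr 1; ring
    · congr 1; ring
  norm_num at h1 h2
  rw [h1, h2]
  simp only [pow_zero, one_mul] at h4
  rw [h4]
  ring

lemma hasDerivAt_exp_neg_sq_half (r : ℝ) :
    HasDerivAt (fun r : ℝ => rexp (-r ^ 2 / 2)) (-r * rexp (-r ^ 2 / 2)) r := by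
  have := (((hasDerivAt_pow 2 r).fun_neg).div_const 2).exp
  refine this.congr_deriv ?_
  push_cast
  ring

lemma integral_pow_four_mul_gaussian (a : ℝ) :
    ∫ r in (0 : ℝ)..a, r ^ 4 * rexp (-r ^ 2 / 2) =
      3 * (∫ r in (0 : ℝ)..a, rexp (-r ^ 2 / 2)) - (a ^ 3 + 3 * a) * rexp (-a ^ 2 / 2) := by
  have h : ∀ r : ℝ, HasDerivAt (fun r : ℝ => -((r ^ 3 + 3 * r) * rexp (-r ^ 2 / 2)))
      (r ^ 4 * rexp (-r ^ 2 / 2) - 3 * rexp (-r ^ 2 / 2)) r := fun r => by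
    have := ((((hasDerivAt_pow 3 r).fun_add ((hasDerivAt_id' r).const_mul 3))).fun_mul
      (hasDerivAt_exp_neg_sq_half r)).fun_neg
    refine this.congr_deriv ?_
    push_cast
    ring
  have hc1 : Continuous fun r : ℝ => r ^ 4 * rexp (-r ^ 2 / 2) := by fun_prop
  have hc2 : Continuous fun r : ℝ => 3 * rexp (-r ^ 2 / 2) := by fun_prop
  have h2 := intervalIntegral.integral_eq_sub_of_hasDerivAt (a := 0) (b := a) (fun r _ => h r)
    ((hc1.sub hc2).intervalIntegrable _ _)
  rw [intervalIntegral.integral_sub (hc1.intervalIntegrable _ _) (hc2.intervalIntegrable _ _),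
    intervalIntegral.integral_const_mul] at h2
  norm_num at h2
  linarith

lemma integral_cubic_mul_gaussian (a b : ℝ) :
    ∫ r in a..b, (4 * a ^ 3 * r - 3 * a * r ^ 3) * rexp (-r ^ 2 / 2) =
      (3 * a * b ^ 2 + 6 * a - 4 * a ^ 3) * rexp (-b ^ 2 / 2) -
        (6 * a - a ^ 3) * rexp (-a ^ 2 / 2) := by
  have h : ∀ r : ℝ, HasDerivAt
      (fun r : ℝ => (3 * a * r ^ 2 + (6 * a - 4 * a ^ 3)) * rexp (-r ^ 2 / 2))
      ((4 * a ^ 3 * r - 3 * a * r ^ 3) * rexp (-r ^ 2 / 2)) r := fun r => by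
    have := (((hasDerivAt_pow 2 r).const_mul (3 * a)).add_const (6 * a - 4 * a ^ 3)).fun_mul
      (hasDerivAt_exp_neg_sq_half r)
    refine this.congr_deriv ?_
    push_cast
    ring
  have hc : Continuous fun r : ℝ => (4 * a ^ 3 * r - 3 * a * r ^ 3) * rexp (-r ^ 2 / 2) := by
    fun_prop
  rw [intervalIntegral.integral_eq_sub_of_hasDerivAt (fun r _ => h r)
    (hc.intervalIntegrable _ _)]
  ring

/-! ### The Gaussian measure of the set of matrices with small spectral radius -/

/-- The vectors whose associated traceless symmetric matrix has spectral radius at most `a`. -/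
def spectralBall (a : ℝ) : Set (EuclideanSpace ℝ (Fin 5)) :=
  {y | ∀ v : Fin 3 → ℝ, ∑ i, v i ^ 2 = 1 → |v ⬝ᵥ tracelessSymm y *ᵥ v| ≤ a}

lemma mem_spectralBall_iff {a : ℝ} (ha : 0 < a) (y : EuclideanSpace ℝ (Fin 5)) :
    y ∈ spectralBall a ↔ |cartanCubic y| ≤ 4 * a ^ 3 - 3 * a * ‖y‖ ^ 2 :=
  forall_abs_form_le_iff ha y

lemma form_tracelessSymm_add (v : Fin 3 → ℝ) (y z : EuclideanSpace ℝ (Fin 5)) :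
    v ⬝ᵥ tracelessSymm (y + z) *ᵥ v = v ⬝ᵥ tracelessSymm y *ᵥ v + v ⬝ᵥ tracelessSymm z *ᵥ v := by
  simp [tracelessSymm, dotProduct, mulVec, Fin.sum_univ_three]
  ring

lemma form_tracelessSymm_smul (v : Fin 3 → ℝ) (c : ℝ) (y : EuclideanSpace ℝ (Fin 5)) :
    v ⬝ᵥ tracelessSymm (c • y) *ᵥ v = c * (v ⬝ᵥ tracelessSymm y *ᵥ v) := by
  simp [tracelessSymm, dotProduct, mulVec, Fin.sum_univ_three]
  ring

lemma continuous_form_tracelessSymm (v : Fin 3 → ℝ) :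
    Continuous fun y => v ⬝ᵥ tracelessSymm y *ᵥ v := by
  simp [tracelessSymm, dotProduct, mulVec, Fin.sum_univ_three]
  fun_prop

lemma isClosed_spectralBall (a : ℝ) : IsClosed (spectralBall a) := by
  simp only [spectralBall, Set.ofPred_forall]
  exact isClosed_iInter fun v => isClosed_iInter fun _ =>
    isClosed_le (continuous_form_tracelessSymm v).abs continuous_const

lemma convex_spectralBall (a : ℝ) : Convex ℝ (spectralBall a) := by
  intro y hy z hz s t hs ht hst v hv
  rw [form_tracelessSymm_add, form_tracelessSymm_smul, form_tracelessSymm_smul]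
  refine (abs_add_le _ _).trans ?_
  rw [abs_mul, abs_mul, abs_of_nonneg hs, abs_of_nonneg ht]
  have h1 := mul_le_mul_of_nonneg_left (hy v hv) hs
  have h2 := mul_le_mul_of_nonneg_left (hz v hv) ht
  have h3 : s * a + t * a = a := by rw [← add_mul, hst, one_mul]
  linarith

lemma measureReal_uniform_abs_le (q : ℝ) :
    (volume.restrict (Set.Icc (-1 : ℝ) 1)).real {u | |u| ≤ q} = 2 * max (min 1 q) 0 := by
  have h : {u : ℝ | |u| ≤ q} ∩ Set.Icc (-1) 1 = Set.Icc (-(min 1 q)) (min 1 q) := by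
    ext u
    simp only [Set.mem_inter_iff, Set.mem_ofPred_eq, Set.mem_Icc, ← abs_le]
    rw [and_comm, ← le_min_iff]
  rw [measureReal_restrict_apply (measurableSet_le (by fun_prop) (by fun_prop)), h,
    Real.volume_real_Icc]
  rcases le_total (min 1 q) 0 with h | h
  · rw [max_eq_right h, max_eq_right (by linarith)]; ring
  · rw [max_eq_left h, max_eq_left (by linarith)]; ring

lemma pow_mul_measureReal_slice {a r : ℝ} (ha : 0 < a) (hr : 0 < r) :
    r ^ 4 * (volume.restrict (Set.Icc (-1 : ℝ) 1)).real
        {u | r ^ 3 * |u| ≤ 4 * a ^ 3 - 3 * a * r ^ 2} =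
      2 * ((Set.Ioc 0 a).indicator (fun r => r ^ 4) r +
        (Set.Ioc a (2 * a / √3)).indicator (fun r => 4 * a ^ 3 * r - 3 * a * r ^ 3) r) := by
  have h3 : √3 ^ 2 = 3 := Real.sq_sqrt (by norm_num)
  have hs : 0 < √3 := by positivity
  have hset : {u : ℝ | r ^ 3 * |u| ≤ 4 * a ^ 3 - 3 * a * r ^ 2} =
      {u | |u| ≤ (4 * a ^ 3 - 3 * a * r ^ 2) / r ^ 3} := by
    ext u
    rw [Set.mem_ofPred_eq, Set.mem_ofPred_eq, le_div_iff₀' (by positivity)]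
  rw [hset, measureReal_uniform_abs_le]
  have hb : r ≤ 2 * a / √3 ↔ 0 ≤ 4 * a ^ 2 - 3 * r ^ 2 := by
    rw [le_div_iff₀ hs, ← sq_le_sq₀ (by positivity) (by positivity), mul_pow, h3]
    constructor <;> intro h <;> linarith
  have hfac : 4 * a ^ 3 - 3 * a * r ^ 2 - r ^ 3 = (a - r) * (2 * a + r) ^ 2 := by ring
  have hp : 0 < (2 * a + r) ^ 2 := by positivity
  by_cases h1 : r ≤ a
  · have hq : 1 ≤ (4 * a ^ 3 - 3 * a * r ^ 2) / r ^ 3 := by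
      rw [one_le_div (by positivity)]
      have := mul_nonneg (sub_nonneg.2 h1) hp.le
      linarith
    rw [min_eq_left hq, Set.indicator_of_mem (Set.mem_Ioc.2 ⟨hr, h1⟩),
      Set.indicator_of_notMem (by simp [h1]), max_eq_left zero_le_one]
    ring
  · push Not at h1
    have hq : (4 * a ^ 3 - 3 * a * r ^ 2) / r ^ 3 ≤ 1 := by
      rw [div_le_one (by positivity)]
      have := mul_neg_of_neg_of_pos (sub_neg.2 h1) hp
      linarith
    rw [min_eq_right hq, Set.indicator_of_notMem (by simp [h1])]
    by_cases h2 : r ≤ 2 * a / √3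
    · rw [Set.indicator_of_mem (Set.mem_Ioc.2 ⟨h1, h2⟩), max_eq_left]
      · field_simp
        ring
      · have := hb.1 h2
        have : 0 ≤ a * (4 * a ^ 2 - 3 * r ^ 2) := by positivity
        exact div_nonneg (by linarith) (by positivity)
    · rw [Set.indicator_of_notMem (by simp [h2]), max_eq_right]
      · ring
      · rw [hb, not_le] at h2
        have := mul_neg_of_pos_of_neg ha h2
        exact div_nonpos_of_nonpos_of_nonneg (by linarith) (by positivity)

lemma integrable_gaussianWeight :
    Integrable fun y : EuclideanSpace ℝ (Fin 5) => rexp (-‖y‖ ^ 2 / 2) := by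
  simpa using integrable_homogeneous_gaussian (f := fun _ => 1) (N := 0) (by fun_prop) (by simp)

lemma indicator_spectralBall_polar {a : ℝ} (ha : 0 < a)
    (ω : Metric.sphere (0 : EuclideanSpace ℝ (Fin 5)) 1) (r : Set.Ioi (0 : ℝ)) :
    (spectralBall a).indicator (fun y => rexp (-‖y‖ ^ 2 / 2))
        ((r : ℝ) • (ω : EuclideanSpace ℝ (Fin 5))) =
      {u : ℝ | (r : ℝ) ^ 3 * |u| ≤ 4 * a ^ 3 - 3 * a * (r : ℝ) ^ 2}.indicator
        (fun _ => rexp (-(r : ℝ) ^ 2 / 2)) (cartanCubic ω) := by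
  have h1 : ‖(ω : EuclideanSpace ℝ (Fin 5))‖ = 1 := by simp
  have h2 : (0 : ℝ) < r := r.2
  have hn : ‖(r : ℝ) • (ω : EuclideanSpace ℝ (Fin 5))‖ = r := by
    rw [norm_smul, h1, mul_one, Real.norm_eq_abs, abs_of_pos h2]
  have hm : (r : ℝ) • (ω : EuclideanSpace ℝ (Fin 5)) ∈ spectralBall a ↔
      cartanCubic ω ∈ {u : ℝ | (r : ℝ) ^ 3 * |u| ≤ 4 * a ^ 3 - 3 * a * (r : ℝ) ^ 2} := by
    rw [mem_spectralBall_iff ha, cartanCubic_smul, hn, abs_mul, abs_of_pos (pow_pos h2 3),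
      Set.mem_ofPred_eq]
  by_cases h : cartanCubic ω ∈
      {u : ℝ | (r : ℝ) ^ 3 * |u| ≤ 4 * a ^ 3 - 3 * a * (r : ℝ) ^ 2}
  · rw [Set.indicator_of_mem h, Set.indicator_of_mem (hm.2 h), hn]
  · rw [Set.indicator_of_notMem h, Set.indicator_of_notMem (fun h' => h (hm.1 h'))]

lemma setIntegral_spectralBall {a : ℝ} (ha : 0 < a) {c : ℝ≥0}
    (hc : cartanLaw = c • volume.restrict (Set.Icc (-1 : ℝ) 1)) :
    ∫ y in spectralBall a, rexp (-‖y‖ ^ 2 / 2) =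
      2 * c * ((∫ r in (0 : ℝ)..a, r ^ 4 * rexp (-r ^ 2 / 2)) +
        ∫ r in a..(2 * a / √3), (4 * a ^ 3 * r - 3 * a * r ^ 3) * rexp (-r ^ 2 / 2)) := by
  have hab : a ≤ 2 * a / √3 := by
    rw [le_div_iff₀ (by positivity)]
    have : √3 ≤ 2 := by rw [Real.sqrt_le_left (by norm_num)]; norm_num
    nlinarith
  have hK := (isClosed_spectralBall a).measurableSet
  have hpolar_int := (integrable_polar _).1 (integrable_gaussianWeight.indicator hK)
  rw [← integral_indicator hK, integral_polar]
  rw [integral_prod_symm _ hpolar_int]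
  simp only [indicator_spectralBall_polar ha]
  have hmeas : ∀ r : ℝ, MeasurableSet {u : ℝ | r ^ 3 * |u| ≤ 4 * a ^ 3 - 3 * a * r ^ 2} :=
    fun r => measurableSet_le (by fun_prop) (by fun_prop)
  have hinner : ∀ r : ℝ, ∫ ω : Metric.sphere (0 : EuclideanSpace ℝ (Fin 5)) 1,
      {u : ℝ | r ^ 3 * |u| ≤ 4 * a ^ 3 - 3 * a * r ^ 2}.indicator
        (fun _ => rexp (-r ^ 2 / 2)) (cartanCubic ω)
        ∂(volume : Measure (EuclideanSpace ℝ (Fin 5))).toSphere =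
      c * (volume.restrict (Set.Icc (-1 : ℝ) 1)).real
        {u | r ^ 3 * |u| ≤ 4 * a ^ 3 - 3 * a * r ^ 2} * rexp (-r ^ 2 / 2) := by
    intro r
    rw [← integral_map (f := {u : ℝ | r ^ 3 * |u| ≤ 4 * a ^ 3 - 3 * a * r ^ 2}.indicator
        (fun _ => rexp (-r ^ 2 / 2))) measurable_cartanCubic_sphere.aemeasurable
      (measurable_const.indicator (hmeas r)).aestronglyMeasurable]
    change ∫ u, _ ∂cartanLaw = _
    rw [hc, integral_indicator_const _ (hmeas r), measureReal_nnreal_smul_apply, smul_eq_mul]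
  simp only [hinner]
  rw [integral_volumeIoiPow 4 (fun r => c * (volume.restrict (Set.Icc (-1 : ℝ) 1)).real
        {u | r ^ 3 * |u| ≤ 4 * a ^ 3 - 3 * a * r ^ 2} * rexp (-r ^ 2 / 2))]
  have hc1 : Continuous fun r : ℝ => r ^ 4 * rexp (-r ^ 2 / 2) := by fun_prop
  have hc2 : Continuous fun r : ℝ => (4 * a ^ 3 * r - 3 * a * r ^ 3) * rexp (-r ^ 2 / 2) := by
    fun_prop
  have hi1 := (hc1.intervalIntegrable (μ := volume) 0 a).1
  have hi2 := (hc2.intervalIntegrable (μ := volume) a (2 * a / √3)).1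
  rw [← integrable_indicator_iff measurableSet_Ioc] at hi1 hi2
  rw [intervalIntegral.integral_of_le ha.le, intervalIntegral.integral_of_le hab,
    ← integral_indicator measurableSet_Ioc, ← integral_indicator measurableSet_Ioc,
    ← integral_add hi1 hi2, ← integral_const_mul, ← integral_indicator measurableSet_Ioi]
  refine integral_congr_ae (.of_forall fun r => ?_)
  simp only
  by_cases hr : r ∈ Set.Ioi (0 : ℝ)
  · have h := pow_mul_measureReal_slice ha hr
    rw [Set.indicator_of_mem hr]
    calc _ = c * rexp (-r ^ 2 / 2) * (r ^ 4 * (volume.restrict (Set.Icc (-1 : ℝ) 1)).real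
        {u | r ^ 3 * |u| ≤ 4 * a ^ 3 - 3 * a * r ^ 2}) := by ring
      _ = _ := by
        rw [h]
        simp only [Set.indicator_apply]
        split_ifs <;> ring
  · have hr' : r ≤ 0 := not_lt.1 hr
    rw [Set.indicator_of_notMem hr, Set.indicator_of_notMem (fun h => absurd h.1 hr),
      Set.indicator_of_notMem (fun h => absurd (ha.trans h.1) hr)]
    ring

lemma integral_gaussianWeight {c : ℝ≥0}
    (hc : cartanLaw = c • volume.restrict (Set.Icc (-1 : ℝ) 1)) :
    ∫ y : EuclideanSpace ℝ (Fin 5), rexp (-‖y‖ ^ 2 / 2) = 2 * c * (3 * √(2 * π) / 2) := by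
  have h := integral_cartanLaw_pow_gaussian 0 0
  rw [hc, integral_pow_uniform] at h
  simp only [pow_zero, mul_zero, one_mul, zero_add, add_zero, integral_gaussian_Ioi_four] at h
  have h2 : (1 - (-1 : ℝ) ^ 1) / (((0 : ℕ) : ℝ) + 1) = 2 := by norm_num
  rw [h, h2]
  ring

lemma setIntegral_spectralBall_div {a : ℝ} (ha : 0 < a) :
    (∫ y in spectralBall a, rexp (-‖y‖ ^ 2 / 2)) /
        ∫ y : EuclideanSpace ℝ (Fin 5), rexp (-‖y‖ ^ 2 / 2) =
      2 * stdNormalCDF a + 6 * stdNormalCDF'' a - 2 * √3 * stdNormalCDF'' (2 * a / √3) - 1 := by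
  obtain ⟨c, hc⟩ := cartanLaw_eq_uniform
  have hpos : 0 < ∫ y : EuclideanSpace ℝ (Fin 5), rexp (-‖y‖ ^ 2 / 2) := integral_exp_pos
    integrable_gaussianWeight
  rw [integral_gaussianWeight hc] at hpos ⊢
  have hc0 : (c : ℝ) ≠ 0 := by
    rintro h
    simp [h] at hpos
  have hs : √3 ≠ 0 := by positivity
  have h3 : √3 ^ 2 = 3 := Real.sq_sqrt (by norm_num)
  have hp : √(2 * π) ≠ 0 := by positivity
  rw [setIntegral_spectralBall ha hc, integral_pow_four_mul_gaussian, integral_cubic_mul_gaussian,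
    stdNormalCDF_eq, stdNormalCDF'', stdNormalCDF'']
  have hb : (2 * a / √3) ^ 2 = 4 * a ^ 2 / 3 := by rw [div_pow, h3]; ring
  rw [hb]
  field_simp
  ring

/-! ### The density of the standard Gaussian measure -/

lemma stdGaussian_eq_withDensity :
    stdGaussian (EuclideanSpace ℝ (Fin 5)) =
      volume.withDensity fun y => ENNReal.ofReal
        (rexp (-‖y‖ ^ 2 / 2) / ∫ z : EuclideanSpace ℝ (Fin 5), rexp (-‖z‖ ^ 2 / 2)) := by
  set C := ∫ z : EuclideanSpace ℝ (Fin 5), rexp (-‖z‖ ^ 2 / 2) with hC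
  have hpos : 0 < C := integral_exp_pos integrable_gaussianWeight
  have : IsFiniteMeasure ((volume : Measure (EuclideanSpace ℝ (Fin 5))).withDensity
      fun y => ENNReal.ofReal (rexp (-‖y‖ ^ 2 / 2) / C)) :=
    isFiniteMeasure_withDensity_ofReal (integrable_gaussianWeight.div_const C).2
  refine Measure.ext_of_charFun (funext fun t => ?_)
  rw [charFun_stdGaussian, charFun_apply,
    integral_withDensity_eq_integral_toReal_smul (by fun_prop) (by simp)]
  have h0 := GaussianFourier.integral_cexp_neg_mul_sq_norm (V := EuclideanSpace ℝ (Fin 5))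
    (b := 1 / 2) (by norm_num)
  have h1 := GaussianFourier.integral_cexp_neg_mul_sq_norm_add (V := EuclideanSpace ℝ (Fin 5))
    (b := 1 / 2) (by norm_num) Complex.I t
  have h2 : ∫ y : EuclideanSpace ℝ (Fin 5), Complex.exp (-(1 / 2) * ‖y‖ ^ 2) = (C : ℂ) := by
    rw [hC, ← integral_complex_ofReal]
    refine integral_congr_ae (.of_forall fun y => ?_)
    simp only
    push_cast
    congr 1
    ring
  rw [← h0, h2] at h1
  have hC0 : (C : ℂ) ≠ 0 := Complex.ofReal_ne_zero.2 hpos.ne'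
  have h3 : ∀ y : EuclideanSpace ℝ (Fin 5),
      (ENNReal.ofReal (rexp (-‖y‖ ^ 2 / 2) / C)).toReal •
        Complex.exp (inner ℝ y t * Complex.I) =
      (C : ℂ)⁻¹ * Complex.exp (-(1 / 2) * ‖y‖ ^ 2 + Complex.I * inner ℝ t y) := fun y => by
    rw [ENNReal.toReal_ofReal (by positivity), Complex.real_smul, Complex.exp_add,
      real_inner_comm t y]
    push_cast
    rw [mul_comm Complex.I, show -(1 / 2 : ℂ) * ‖y‖ ^ 2 = -‖y‖ ^ 2 / 2 by ring]
    ring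
  simp only [h3]
  rw [integral_const_mul, h1, ← mul_assoc, inv_mul_cancel₀ hC0, one_mul, Complex.I_sq]
  congr 1
  ring

lemma stdGaussian_absolutelyContinuous :
    stdGaussian (EuclideanSpace ℝ (Fin 5)) ≪ volume := by
  rw [stdGaussian_eq_withDensity]
  exact withDensity_absolutelyContinuous _ _

lemma stdGaussian_spectralBall {a : ℝ} (ha : 0 < a) :
    (stdGaussian (EuclideanSpace ℝ (Fin 5))).real (spectralBall a) =
      2 * stdNormalCDF a + 6 * stdNormalCDF'' a - 2 * √3 * stdNormalCDF'' (2 * a / √3) - 1 := by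
  have hpos : 0 < ∫ z : EuclideanSpace ℝ (Fin 5), rexp (-‖z‖ ^ 2 / 2) :=
    integral_exp_pos integrable_gaussianWeight
  rw [← setIntegral_spectralBall_div ha, stdGaussian_eq_withDensity, measureReal_def,
    withDensity_apply _ (isClosed_spectralBall a).measurableSet,
    ← ofReal_integral_eq_lintegral_ofReal
      (integrable_gaussianWeight.div_const _).integrableOn
      (.of_forall fun y => by positivity),
    ENNReal.toReal_ofReal (by positivity), integral_div]

lemma stdGaussian_spectralBall_zero :
    (stdGaussian (EuclideanSpace ℝ (Fin 5))).real (spectralBall 0) = 0 := by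
  have h : spectralBall 0 ⊆ {0} := by
    intro y hy
    by_contra h0
    have hn : 0 < ‖y‖ := norm_pos_iff.2 h0
    have ha : 0 < ‖y‖ / 2 := by positivity
    have h1 := (mem_spectralBall_iff ha y).1 fun v hv => (hy v hv).trans ha.le
    have h2 := (abs_nonneg _).trans h1
    have h3 : 0 < ‖y‖ ^ 3 := by positivity
    linarith
  rw [measureReal_def, stdGaussian_absolutelyContinuous (measure_mono_null h (by simp))]
  rfl

lemma stdGaussian_frontier_spectralBall (a : ℝ) :
    stdGaussian (EuclideanSpace ℝ (Fin 5)) (frontier (spectralBall a)) = 0 :=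
  stdGaussian_absolutelyContinuous ((convex_spectralBall a).addHaar_frontier volume)

/-! ### Moments of the uniform distribution on `S²` -/

/-- The five normalized harmonic polynomials of degree two on `S²`. -/
def harmonicVec (x : Fin 3 → ℝ) : EuclideanSpace ℝ (Fin 5) :=
  !₂[√5 / 2 * (3 * x 2 ^ 2 - 1), √15 / 2 * (x 0 ^ 2 - x 1 ^ 2), √15 * (x 0 * x 1),
    √15 * (x 0 * x 2), √15 * (x 1 * x 2)]

lemma continuous_harmonicVec : Continuous harmonicVec := by
  refine (PiLp.continuous_toLp 2 _).comp (continuous_pi fun i => ?_)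
  fin_cases i <;> simp <;> fun_prop

lemma inner_harmonicVec (x : Fin 3 → ℝ) (t : EuclideanSpace ℝ (Fin 5)) :
    inner ℝ (harmonicVec x) t =
      √5 / 2 * (3 * x 2 ^ 2 - 1) * t 0 + √15 / 2 * (x 0 ^ 2 - x 1 ^ 2) * t 1 +
        √15 * (x 0 * x 1) * t 2 + √15 * (x 0 * x 2) * t 3 + √15 * (x 1 * x 2) * t 4 := by
  simp [harmonicVec, PiLp.inner_apply, Fin.sum_univ_five]
  ring

section Moments

variable {U : Measure (Fin 3 → ℝ)}

lemma integrable_of_continuous_sphere [IsProbabilityMeasure U]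
    (hU : U {x : Fin 3 → ℝ | ∑ a, x a ^ 2 = 1}ᶜ = 0) {f : (Fin 3 → ℝ) → ℝ} (hf : Continuous f) :
    Integrable f U := by
  have hS : IsCompact {x : Fin 3 → ℝ | ∑ a, x a ^ 2 = 1} := by
    refine (isCompact_Icc (a := fun _ => (-1 : ℝ)) (b := fun _ => 1)).of_isClosed_subset
      (isClosed_eq (by fun_prop) continuous_const) fun x hx => ?_
    have h : ∀ i, x i ^ 2 ≤ 1 := fun i =>
      (Finset.single_le_sum (f := fun a => x a ^ 2) (fun a _ => sq_nonneg _)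
        (Finset.mem_univ i)).trans hx.le
    exact ⟨fun i => (abs_le_one_iff_mul_self_le_one.2 (by nlinarith [h i]) |> abs_le.1).1,
      fun i => (abs_le_one_iff_mul_self_le_one.2 (by nlinarith [h i]) |> abs_le.1).2⟩
  rw [← Measure.restrict_eq_self_of_ae_mem (μ := U) (s := {x : Fin 3 → ℝ | ∑ a, x a ^ 2 = 1}) hU]
  exact hf.continuousOn.integrableOn_compact hS

lemma integral_add_of_continuous_sphere [IsProbabilityMeasure U]
    (hU : U {x : Fin 3 → ℝ | ∑ a, x a ^ 2 = 1}ᶜ = 0) (f g : (Fin 3 → ℝ) → ℝ)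
    (hf : Continuous f) (hg : Continuous g) :
    ∫ x, (f x + g x) ∂U = ∫ x, f x ∂U + ∫ x, g x ∂U :=
  integral_add (integrable_of_continuous_sphere hU hf) (integrable_of_continuous_sphere hU hg)

lemma integral_comp_mulVec
    (hrot : ∀ O : Matrix (Fin 3) (Fin 3) ℝ, O * Oᵀ = 1 → U.map (fun x => O.mulVec x) = U)
    {O : Matrix (Fin 3) (Fin 3) ℝ} (hO : O * Oᵀ = 1) {f : (Fin 3 → ℝ) → ℝ} (hf : Continuous f) :
    ∫ x, f (O *ᵥ x) ∂U = ∫ x, f x ∂U := by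
  conv_rhs => rw [← hrot O hO]
  rw [integral_map (by fun_prop) hf.aestronglyMeasurable]

lemma integral_comp_flip_zero
    (hrot : ∀ O : Matrix (Fin 3) (Fin 3) ℝ, O * Oᵀ = 1 → U.map (fun x => O.mulVec x) = U)
    {f : (Fin 3 → ℝ) → ℝ} (hf : Continuous f) :
    ∫ x, f ![-x 0, x 1, x 2] ∂U = ∫ x, f x ∂U := by
  rw [← integral_comp_mulVec hrot (O := !![-1, 0, 0; 0, 1, 0; 0, 0, 1]) _ hf]
  · congr! 3 with x
    ext i; fin_cases i <;> simp [mulVec, dotProduct, Fin.sum_univ_three]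
  · ext i j; fin_cases i <;> fin_cases j <;> simp [Matrix.mul_apply, Fin.sum_univ_three]

lemma integral_comp_flip_one
    (hrot : ∀ O : Matrix (Fin 3) (Fin 3) ℝ, O * Oᵀ = 1 → U.map (fun x => O.mulVec x) = U)
    {f : (Fin 3 → ℝ) → ℝ} (hf : Continuous f) :
    ∫ x, f ![x 0, -x 1, x 2] ∂U = ∫ x, f x ∂U := by
  rw [← integral_comp_mulVec hrot (O := !![1, 0, 0; 0, -1, 0; 0, 0, 1]) _ hf]
  · congr! 3 with x
    ext i; fin_cases i <;> simp [mulVec, dotProduct, Fin.sum_univ_three]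
  · ext i j; fin_cases i <;> fin_cases j <;> simp [Matrix.mul_apply, Fin.sum_univ_three]

lemma integral_comp_cycle
    (hrot : ∀ O : Matrix (Fin 3) (Fin 3) ℝ, O * Oᵀ = 1 → U.map (fun x => O.mulVec x) = U)
    {f : (Fin 3 → ℝ) → ℝ} (hf : Continuous f) :
    ∫ x, f ![x 1, x 2, x 0] ∂U = ∫ x, f x ∂U := by
  rw [← integral_comp_mulVec hrot (O := !![0, 1, 0; 0, 0, 1; 1, 0, 0]) _ hf]
  · congr! 3 with x
    ext i; fin_cases i <;> simp [mulVec, dotProduct, Fin.sum_univ_three]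
  · ext i j; fin_cases i <;> fin_cases j <;> simp [Matrix.mul_apply, Fin.sum_univ_three]

lemma integral_comp_rotation
    (hrot : ∀ O : Matrix (Fin 3) (Fin 3) ℝ, O * Oᵀ = 1 → U.map (fun x => O.mulVec x) = U)
    {f : (Fin 3 → ℝ) → ℝ} (hf : Continuous f) :
    ∫ x, f ![(x 0 - x 1) / √2, (x 0 + x 1) / √2, x 2] ∂U = ∫ x, f x ∂U := by
  have h2 : √2 * √2 = 2 := Real.mul_self_sqrt (by norm_num)
  have hh : (√2)⁻¹ * (√2)⁻¹ = 1 / 2 := by rw [← mul_inv, h2]; norm_num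
  rw [← integral_comp_mulVec hrot
    (O := !![(√2)⁻¹, -(√2)⁻¹, 0; (√2)⁻¹, (√2)⁻¹, 0; 0, 0, 1]) _ hf]
  · congr! 3 with x
    ext i; fin_cases i <;> simp [mulVec, dotProduct, Fin.sum_univ_three] <;> ring
  · ext i j
    fin_cases i <;> fin_cases j <;> simp [Matrix.mul_apply, Fin.sum_univ_three, hh] <;> norm_num

/-- Averaging over the sign changes of the first two coordinates. -/
lemma integral_eq_integral_flips [IsProbabilityMeasure U]
    (hU : U {x : Fin 3 → ℝ | ∑ a, x a ^ 2 = 1}ᶜ = 0)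
    (hrot : ∀ O : Matrix (Fin 3) (Fin 3) ℝ, O * Oᵀ = 1 → U.map (fun x => O.mulVec x) = U)
    {f : (Fin 3 → ℝ) → ℝ} (hf : Continuous f) :
    ∫ x, f x ∂U = ∫ x, (f ![x 0, x 1, x 2] + f ![-x 0, x 1, x 2] +
      f ![x 0, -x 1, x 2] + f ![-x 0, -x 1, x 2]) / 4 ∂U := by
  have hc : ∀ a b : ℝ, Continuous fun x : Fin 3 → ℝ => f ![a * x 0, b * x 1, x 2] := fun a b =>
    hf.comp (continuous_pi fun i => by fin_cases i <;> simp <;> fun_prop)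
  have h0 : ∀ x : Fin 3 → ℝ, ![x 0, x 1, x 2] = x := fun x => by
    ext i; fin_cases i <;> simp
  have h1 := integral_comp_flip_zero hrot hf
  have h2 := integral_comp_flip_one hrot hf
  have h3 := integral_comp_flip_zero hrot (hc 1 (-1))
  have c0 := hc 1 1
  have c1 := hc (-1) 1
  have c2 := hc 1 (-1)
  have c3 := hc (-1) (-1)
  simp only [one_mul, neg_mul, Matrix.cons_val] at h3 c0 c1 c2 c3
  rw [integral_div, integral_add_of_continuous_sphere hU _ _ (by fun_prop) c3,
    integral_add_of_continuous_sphere hU _ _ (by fun_prop) c2,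
    integral_add_of_continuous_sphere hU _ _ c0 c1]
  simp only [h0]
  rw [h1, h3, h2]
  ring

lemma moments_two [IsProbabilityMeasure U]
    (hU : U {x : Fin 3 → ℝ | ∑ a, x a ^ 2 = 1}ᶜ = 0)
    (hrot : ∀ O : Matrix (Fin 3) (Fin 3) ℝ, O * Oᵀ = 1 → U.map (fun x => O.mulVec x) = U) :
    ∫ x, x 0 ^ 2 ∂U = 1 / 3 ∧ ∫ x, x 1 ^ 2 ∂U = 1 / 3 ∧ ∫ x, x 2 ^ 2 ∂U = 1 / 3 := by
  have h1 := integral_comp_cycle hrot (f := fun x => x 0 ^ 2) (by fun_prop)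
  have h2 := integral_comp_cycle hrot (f := fun x => x 1 ^ 2) (by fun_prop)
  simp only [Matrix.cons_val] at h1 h2
  have h3 : ∫ x, (x 0 ^ 2 + x 1 ^ 2 + x 2 ^ 2) ∂U = 1 := by
    rw [integral_congr_ae (g := fun _ => 1)]
    · simp
    · filter_upwards [(show ∀ᵐ x ∂U, ∑ a, x a ^ 2 = 1 from hU)] with x hx
      rwa [Fin.sum_univ_three] at hx
  simp (disch := fun_prop) only [integral_add_of_continuous_sphere hU] at h3
  refine ⟨?_, ?_, ?_⟩ <;> linarith

lemma moments_four [IsProbabilityMeasure U]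
    (hU : U {x : Fin 3 → ℝ | ∑ a, x a ^ 2 = 1}ᶜ = 0)
    (hrot : ∀ O : Matrix (Fin 3) (Fin 3) ℝ, O * Oᵀ = 1 → U.map (fun x => O.mulVec x) = U) :
    (∫ x, x 0 ^ 4 ∂U = 1 / 5 ∧ ∫ x, x 1 ^ 4 ∂U = 1 / 5 ∧ ∫ x, x 2 ^ 4 ∂U = 1 / 5) ∧
      ∫ x, x 0 ^ 2 * x 1 ^ 2 ∂U = 1 / 15 ∧ ∫ x, x 0 ^ 2 * x 2 ^ 2 ∂U = 1 / 15 ∧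
      ∫ x, x 1 ^ 2 * x 2 ^ 2 ∂U = 1 / 15 := by
  have h1 := integral_comp_cycle hrot (f := fun x => x 0 ^ 4) (by fun_prop)
  have h2 := integral_comp_cycle hrot (f := fun x => x 1 ^ 4) (by fun_prop)
  have h3 := integral_comp_cycle hrot (f := fun x => x 0 ^ 2 * x 1 ^ 2) (by fun_prop)
  have h4 := integral_comp_cycle hrot (f := fun x => x 0 ^ 2 * x 2 ^ 2) (by fun_prop)
  have h5 := integral_comp_rotation hrot (f := fun x => x 0 ^ 4 + x 1 ^ 4) (by fun_prop)
  simp only [Matrix.cons_val] at h1 h2 h3 h4 h5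
  have e5 : ∀ x : Fin 3 → ℝ, ((x 0 - x 1) / √2) ^ 4 + ((x 0 + x 1) / √2) ^ 4 =
      (1 / 2) * (x 0 ^ 4 + x 1 ^ 4 + 6 * (x 0 ^ 2 * x 1 ^ 2)) := fun x => by
    have h2 : √2 ^ 4 = 4 := by
      rw [show 4 = 2 * 2 from rfl, pow_mul, Real.sq_sqrt (by norm_num)]; norm_num
    rw [div_pow, div_pow, h2]
    ring
  simp only [e5] at h5
  simp (disch := fun_prop) only [integral_add_of_continuous_sphere hU, integral_const_mul] at h5
  have h6 : ∫ x, (x 0 ^ 4 + x 1 ^ 4 + x 2 ^ 4 +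
      2 * (x 0 ^ 2 * x 1 ^ 2 + x 0 ^ 2 * x 2 ^ 2 + x 1 ^ 2 * x 2 ^ 2)) ∂U = 1 := by
    rw [integral_congr_ae (g := fun _ => 1)]
    · simp
    · filter_upwards [(show ∀ᵐ x ∂U, ∑ a, x a ^ 2 = 1 from hU)] with x hx
      rw [Fin.sum_univ_three] at hx
      calc _ = (x 0 ^ 2 + x 1 ^ 2 + x 2 ^ 2) ^ 2 := by ring
        _ = 1 := by rw [hx, one_pow]
  simp (disch := fun_prop) only [integral_add_of_continuous_sphere hU, integral_const_mul] at h6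
  have h4' : ∫ x, x 0 ^ 2 * x 1 ^ 2 ∂U = ∫ x, x 0 ^ 2 * x 2 ^ 2 ∂U := by
    rw [← h4]
    exact integral_congr_ae (.of_forall fun x => mul_comm _ _)
  refine ⟨⟨?_, ?_, ?_⟩, ?_, ?_, ?_⟩ <;> linarith

lemma integral_inner_harmonicVec [IsProbabilityMeasure U]
    (hU : U {x : Fin 3 → ℝ | ∑ a, x a ^ 2 = 1}ᶜ = 0)
    (hrot : ∀ O : Matrix (Fin 3) (Fin 3) ℝ, O * Oᵀ = 1 → U.map (fun x => O.mulVec x) = U)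
    (t : EuclideanSpace ℝ (Fin 5)) :
    ∫ x, inner ℝ (harmonicVec x) t ∂U = 0 := by
  obtain ⟨h0, h1, h2⟩ := moments_two hU hrot
  rw [integral_eq_integral_flips hU hrot (continuous_harmonicVec.inner continuous_const)]
  have e : ∀ x : Fin 3 → ℝ, (inner ℝ (harmonicVec ![x 0, x 1, x 2]) t +
      inner ℝ (harmonicVec ![-x 0, x 1, x 2]) t + inner ℝ (harmonicVec ![x 0, -x 1, x 2]) t +
      inner ℝ (harmonicVec ![-x 0, -x 1, x 2]) t) / 4 =
      √15 / 2 * t 1 * x 0 ^ 2 + -(√15 / 2 * t 1) * x 1 ^ 2 + 3 * √5 / 2 * t 0 * x 2 ^ 2 +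
        -(√5 / 2 * t 0) := fun x => by
    simp only [inner_harmonicVec, Matrix.cons_val]
    ring
  simp only [e]
  simp (disch := fun_prop) only [integral_add_of_continuous_sphere hU, integral_const_mul]
  rw [h0, h1, h2]
  simp
  ring

lemma integral_inner_harmonicVec_sq [IsProbabilityMeasure U]
    (hU : U {x : Fin 3 → ℝ | ∑ a, x a ^ 2 = 1}ᶜ = 0)
    (hrot : ∀ O : Matrix (Fin 3) (Fin 3) ℝ, O * Oᵀ = 1 → U.map (fun x => O.mulVec x) = U)
    (t : EuclideanSpace ℝ (Fin 5)) :
    ∫ x, inner ℝ (harmonicVec x) t ^ 2 ∂U = ‖t‖ ^ 2 := by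
  obtain ⟨⟨h0, h1, h2⟩, h3, h4, h5⟩ := moments_four hU hrot
  obtain ⟨m0, m1, m2⟩ := moments_two hU hrot
  have h15 : √15 ^ 2 = 15 := Real.sq_sqrt (by norm_num)
  have h55 : √5 ^ 2 = 5 := Real.sq_sqrt (by norm_num)
  have hc : Continuous fun x => inner ℝ (harmonicVec x) t ^ 2 :=
    (continuous_harmonicVec.inner continuous_const).pow 2
  rw [integral_eq_integral_flips hU hrot hc]
  have e : ∀ x : Fin 3 → ℝ, (inner ℝ (harmonicVec ![x 0, x 1, x 2]) t ^ 2 +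
      inner ℝ (harmonicVec ![-x 0, x 1, x 2]) t ^ 2 +
      inner ℝ (harmonicVec ![x 0, -x 1, x 2]) t ^ 2 +
      inner ℝ (harmonicVec ![-x 0, -x 1, x 2]) t ^ 2) / 4 =
      15 / 4 * t 1 ^ 2 * x 0 ^ 4 + 15 / 4 * t 1 ^ 2 * x 1 ^ 4 + 45 / 4 * t 0 ^ 2 * x 2 ^ 4 +
      (15 * t 2 ^ 2 - 15 / 2 * t 1 ^ 2) * (x 0 ^ 2 * x 1 ^ 2) +
      (15 * t 3 ^ 2 + 3 / 2 * √5 * √15 * t 0 * t 1) * (x 0 ^ 2 * x 2 ^ 2) +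
      (15 * t 4 ^ 2 - 3 / 2 * √5 * √15 * t 0 * t 1) * (x 1 ^ 2 * x 2 ^ 2) +
      -(√5 * √15 / 2 * t 0 * t 1) * x 0 ^ 2 + √5 * √15 / 2 * t 0 * t 1 * x 1 ^ 2 +
      -(15 / 2 * t 0 ^ 2) * x 2 ^ 2 + 5 / 4 * t 0 ^ 2 := fun x => by
    simp only [inner_harmonicVec, Matrix.cons_val]
    ring_nf
    rw [h15, h55]
    ring
  simp only [e]
  simp (disch := fun_prop) only [integral_add_of_continuous_sphere hU, integral_const_mul]
  rw [h0, h1, h2, h3, h4, h5, m0, m1, m2]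
  rw [EuclideanSpace.norm_sq_eq]
  simp [Fin.sum_univ_five]
  ring

end Moments

/-! ### The central limit theorem for isotropic random vectors -/

section CentralLimit

variable {ι : Type*} [Fintype ι] {Ω : Type*} [MeasurableSpace Ω] {U : Measure Ω}
  [IsProbabilityMeasure U] {Y : Ω → EuclideanSpace ℝ ι}

lemma charFun_map_smul_sum_pi (hY : Measurable Y) (n : ℕ) (c : ℝ) (t : EuclideanSpace ℝ ι) :
    charFun ((Measure.pi fun _ : Fin n => U).map fun x => c • ∑ i, Y (x i)) t =
      charFun (U.map Y) (c • t) ^ n := by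
  have hm : Measurable fun x : Fin n → Ω => c • ∑ i, Y (x i) := by fun_prop
  rw [charFun_apply, integral_map hm.aemeasurable (by fun_prop), charFun_apply,
    integral_map hY.aemeasurable (by fun_prop)]
  have e : ∀ x : Fin n → Ω, Complex.exp (inner ℝ (c • ∑ i, Y (x i)) t * Complex.I) =
      ∏ i, Complex.exp (inner ℝ (Y (x i)) (c • t) * Complex.I) := fun x => by
    rw [← Complex.exp_sum, real_inner_smul_left, sum_inner, Finset.mul_sum]
    push_cast
    simp only [Finset.sum_mul, real_inner_smul_right]
    push_cast
    rfl
  simp only [e]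
  rw [integral_fintype_prod_eq_prod (fun _ : Fin n => fun x : Ω =>
    Complex.exp (inner ℝ (Y x) (c • t) * Complex.I))]
  simp

/-- Multivariate central limit theorem for centred random vectors with identity covariance. -/
lemma tendsto_charFun_smul_sum_pi (hY : Measurable Y)
    (h0 : ∀ t, ∫ x, inner ℝ (Y x) t ∂U = 0) (h1 : ∀ t, ∫ x, inner ℝ (Y x) t ^ 2 ∂U = ‖t‖ ^ 2)
    (t : EuclideanSpace ℝ ι) :
    Tendsto (fun n : ℕ => charFun
        ((Measure.pi fun _ : Fin n => U).map fun x => (√n)⁻¹ • ∑ i, Y (x i)) t) atTop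
      (𝓝 (charFun (stdGaussian (EuclideanSpace ℝ ι)) t)) := by
  have : IsProbabilityMeasure (U.map Y) := Measure.isProbabilityMeasure_map hY.aemeasurable
  simp only [charFun_map_smul_sum_pi hY, charFun_stdGaussian]
  rcases eq_or_ne t 0 with rfl | ht
  · simp
  have hn : ‖t‖ ≠ 0 := norm_ne_zero_iff.2 ht
  have h := tendsto_charFun_inv_sqrt_mul_pow (P := U) (X := fun x => inner ℝ (Y x) (‖t‖⁻¹ • t))
    (by fun_prop) (h0 _) (by
      simp only [Pi.pow_apply]
      rw [h1, norm_smul, norm_inv, norm_norm, inv_mul_cancel₀ hn, one_pow]) ‖t‖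
  convert h using 2 with n
  congr 1
  rw [charFun_apply, integral_map (by fun_prop) (by fun_prop), charFun_apply_real,
    integral_map (by fun_prop) (by fun_prop)]
  congr 1
  ext x
  congr 2
  rw [real_inner_smul_right, real_inner_smul_right]
  push_cast
  have : (‖t‖ : ℂ) ≠ 0 := Complex.ofReal_ne_zero.2 hn
  field_simp

lemma tendsto_pi_smul_sum_mem (hY : Measurable Y)
    (h0 : ∀ t, ∫ x, inner ℝ (Y x) t ∂U = 0) (h1 : ∀ t, ∫ x, inner ℝ (Y x) t ^ 2 ∂U = ‖t‖ ^ 2)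
    {K : Set (EuclideanSpace ℝ ι)} (hK : MeasurableSet K)
    (hf : stdGaussian (EuclideanSpace ℝ ι) (frontier K) = 0) :
    Tendsto (fun n : ℕ => (Measure.pi fun _ : Fin n => U).real
        {x | (√n)⁻¹ • ∑ i, Y (x i) ∈ K}) atTop
      (𝓝 ((stdGaussian (EuclideanSpace ℝ ι)).real K)) := by
  have hm : ∀ n : ℕ, Measurable fun x : Fin n → Ω => (√n)⁻¹ • ∑ i, Y (x i) := fun n => by
    fun_prop
  obtain ⟨P, hP⟩ : ∃ P : ℕ → ProbabilityMeasure (EuclideanSpace ℝ ι), ∀ n,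
      (P n : Measure (EuclideanSpace ℝ ι)) =
        (Measure.pi fun _ : Fin n => U).map fun x => (√n)⁻¹ • ∑ i, Y (x i) :=
    ⟨fun n => ⟨_, Measure.isProbabilityMeasure_map (hm n).aemeasurable⟩, fun n => rfl⟩
  obtain ⟨G, hG⟩ : ∃ G : ProbabilityMeasure (EuclideanSpace ℝ ι),
      (G : Measure (EuclideanSpace ℝ ι)) = stdGaussian (EuclideanSpace ℝ ι) :=
    ⟨⟨_, isProbabilityMeasure_stdGaussian⟩, rfl⟩
  have hlim : Tendsto P atTop (𝓝 G) := by
    refine ProbabilityMeasure.tendsto_iff_tendsto_charFun.2 fun t => ?_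
    simp only [hP, hG]
    exact tendsto_charFun_smul_sum_pi hY h0 h1 t
  rw [← hG] at hf
  have h := ProbabilityMeasure.tendsto_measure_of_null_frontier_of_tendsto' hlim hf
  have h2 := (ENNReal.tendsto_toReal (measure_ne_top _ _)).comp h
  rw [hG] at h2
  refine h2.congr fun n => ?_
  rw [Function.comp_apply, hP, Measure.map_apply (hm n) hK]
  rfl

end CentralLimit

lemma form_tracelessSymm_harmonicVec {x v : Fin 3 → ℝ} (hx : ∑ a, x a ^ 2 = 1)
    (hv : ∑ a, v a ^ 2 = 1) :
    v ⬝ᵥ tracelessSymm (harmonicVec x) *ᵥ v = √5 / 2 * (3 * (∑ a, v a * x a) ^ 2 - 1) := by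
  have h15 : √15 = √3 * √5 := by rw [← Real.sqrt_mul (by norm_num)]; norm_num
  have h3 : √3 ^ 2 = 3 := Real.sq_sqrt (by norm_num)
  simp only [Fin.sum_univ_three] at hx hv ⊢
  simp [tracelessSymm, harmonicVec, dotProduct, mulVec, Fin.sum_univ_three, h15]
  linear_combination √5 * ((x 0 ^ 2 - x 1 ^ 2) / 4 * (v 0 ^ 2 - v 1 ^ 2) + x 0 * x 1 * (v 0 * v 1)
    + x 0 * x 2 * (v 0 * v 2) + x 1 * x 2 * (v 1 * v 2)) * h3 - √5 / 2 * hv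
    - 3 / 4 * √5 * (v 0 ^ 2 + v 1 ^ 2) * hx

lemma form_tracelessSymm_sum {ι : Type*} (s : Finset ι) (v : Fin 3 → ℝ)
    (y : ι → EuclideanSpace ℝ (Fin 5)) :
    v ⬝ᵥ tracelessSymm (∑ i ∈ s, y i) *ᵥ v = ∑ i ∈ s, v ⬝ᵥ tracelessSymm (y i) *ᵥ v := by
  classical
  induction s using Finset.induction_on with
  | empty => simpa using form_tracelessSymm_smul v 0 0
  | insert a s ha ih => rw [Finset.sum_insert ha, Finset.sum_insert ha, form_tracelessSymm_add, ih]

lemma form_Sn {p n : ℕ} (x : Fin n → Fin p → ℝ) (v : Fin p → ℝ) :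
    v ⬝ᵥ (Sn p n x).mulVec v = 1 / (n : ℝ) * ∑ i, (∑ a, v a * x i a) ^ 2 := by
  simp only [Sn, dotProduct, mulVec, Matrix.of_apply, Finset.mul_sum, Finset.sum_mul, sq]
  rw [Finset.sum_comm' (t' := Finset.univ) (s' := fun _ => Finset.univ) (by simp)]
  conv_lhs => enter [2, b]; rw [Finset.sum_comm]
  rw [Finset.sum_comm]
  refine Finset.sum_congr rfl fun i _ => Finset.sum_congr rfl fun a _ =>
    Finset.sum_congr rfl fun b _ => by ring

lemma form_tracelessSymm_smul_sum_harmonicVec {n : ℕ} (hn : 0 < n) {x : Fin n → Fin 3 → ℝ}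
    (hx : ∀ i, ∑ a, x i a ^ 2 = 1) {v : Fin 3 → ℝ} (hv : ∑ a, v a ^ 2 = 1) :
    v ⬝ᵥ tracelessSymm ((√n)⁻¹ • ∑ i, harmonicVec (x i)) *ᵥ v
      = √5 / 2 * (√n * (3 * (v ⬝ᵥ (Sn 3 n x).mulVec v) - 1)) := by
  have hn0 : (n : ℝ) ≠ 0 := by exact_mod_cast hn.ne'
  have hs : √(n : ℝ) ≠ 0 := Real.sqrt_ne_zero'.2 (by exact_mod_cast hn)
  have hs2 : √(n : ℝ) ^ 2 = n := Real.sq_sqrt (Nat.cast_nonneg n)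
  rw [form_tracelessSymm_smul, form_tracelessSymm_sum, form_Sn,
    Finset.sum_congr rfl fun i _ => form_tracelessSymm_harmonicVec (hx i) hv, ← Finset.mul_sum,
    Finset.sum_sub_distrib, ← Finset.mul_sum]
  simp only [Finset.sum_const, Finset.card_univ, Fintype.card_fin, nsmul_eq_mul, mul_one]
  field_simp
  rw [hs2]

/-- The two extreme values of a quadratic form on the sphere control all of its values. -/
lemma max_abs_maxEig_minEig_le_iff {p : ℕ} (hp : 0 < p) (A : Matrix (Fin p) (Fin p) ℝ) (s : ℝ) :
    max |(p : ℝ) * maxEig A - 1| |(p : ℝ) * minEig A - 1| ≤ s ↔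
      ∀ v : Fin p → ℝ, ∑ i, v i ^ 2 = 1 → |(p : ℝ) * (v ⬝ᵥ A.mulVec v) - 1| ≤ s := by
  have hp' : (0 : ℝ) < p := by exact_mod_cast hp
  set R := {r | ∃ v : Fin p → ℝ, (∑ i, v i ^ 2) = 1 ∧ r = v ⬝ᵥ A.mulVec v} with hR
  have hK : IsCompact {v : Fin p → ℝ | ∑ i, v i ^ 2 = 1} := by
    refine Metric.isCompact_of_isClosed_isBounded
      (isClosed_eq (by fun_prop) continuous_const) ?_
    refine (Metric.isBounded_closedBall (x := (0 : Fin p → ℝ)) (r := 1)).subset fun v hv => ?_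
    rw [mem_closedBall_zero_iff, pi_norm_le_iff_of_nonneg zero_le_one]
    intro i
    rw [Real.norm_eq_abs, ← sq_le_one_iff_abs_le_one, ← (show ∑ i, v i ^ 2 = 1 from hv)]
    exact Finset.single_le_sum (f := fun i => v i ^ 2) (fun j _ => sq_nonneg _)
      (Finset.mem_univ i)
  have hRc : IsCompact R := by
    have : R = (fun v : Fin p → ℝ => v ⬝ᵥ A.mulVec v) '' {v | ∑ i, v i ^ 2 = 1} := by
      ext r
      simp [hR, eq_comm]
    rw [this]
    refine hK.image ?_
    simp only [dotProduct, mulVec]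
    fun_prop
  have hRn : R.Nonempty := ⟨_, Pi.single ⟨0, hp⟩ 1, by simp [Pi.single_apply, ite_pow], rfl⟩
  obtain ⟨v, hv, hv'⟩ := hRc.sSup_mem hRn
  obtain ⟨w, hw, hw'⟩ := hRc.sInf_mem hRn
  have hM : maxEig A = sSup R := rfl
  have hm : minEig A = sInf R := rfl
  rw [max_le_iff]
  constructor
  · rintro ⟨h1, h2⟩ u hu
    have hu1 : u ⬝ᵥ A.mulVec u ≤ maxEig A := le_csSup hRc.bddAbove ⟨u, hu, rfl⟩
    have hu2 : minEig A ≤ u ⬝ᵥ A.mulVec u := csInf_le hRc.bddBelow ⟨u, hu, rfl⟩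
    rw [abs_le] at h1 h2 ⊢
    constructor <;> nlinarith
  · intro h
    rw [hM, hm, hv', hw']
    exact ⟨h v hv, h w hw⟩

lemma smul_sum_harmonicVec_mem_spectralBall_iff {n : ℕ} (hn : 0 < n) {x : Fin n → Fin 3 → ℝ}
    (hx : ∀ i, ∑ a, x i a ^ 2 = 1) (ℓ : ℝ) :
    (√n)⁻¹ • ∑ i, harmonicVec (x i) ∈ spectralBall (√5 * ℓ / 2) ↔
      √n * max |3 * maxEig (Sn 3 n x) - 1| |3 * minEig (Sn 3 n x) - 1| ≤ ℓ := by
  have hs : 0 < √(n : ℝ) := Real.sqrt_pos.2 (by exact_mod_cast hn)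
  have h5 : 0 < √(5 : ℝ) / 2 := by positivity
  rw [← le_div_iff₀' hs]
  have h := max_abs_maxEig_minEig_le_iff (p := 3) (by norm_num) (Sn 3 n x) (ℓ / √n)
  rw [Nat.cast_ofNat] at h
  rw [h]
  refine forall₂_congr fun v hv => ?_
  rw [form_tracelessSymm_smul_sum_harmonicVec hn hx hv, abs_mul, abs_mul, abs_of_pos h5,
    abs_of_pos hs, le_div_iff₀' hs, mul_div_right_comm, mul_le_mul_iff_right₀ h5]

/-- Corollary 5.1(ii), case `p = 3`, two-sided statistic.
Under uniformity on `S²`, `T_±^{(n)} = √n max(|3λ̂_{n1}-1|, |3λ̂_{n3}-1|)` converges in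
distribution to the law with cdf
`ℓ ↦ {2Φ(√5 ℓ/2) + 6Φ''(√5 ℓ/2) - 2√3 Φ''(√5 ℓ/√3) - 1} 1[ℓ > 0]` (this cdf is continuous,
so cdf convergence holds at every point). -/
theorem sphere_twosided_eigenvalue_statistic_null_limit
    (U : Measure (Fin 3 → ℝ)) [IsProbabilityMeasure U]
    (hUsphere : U {x : Fin 3 → ℝ | ∑ a, x a ^ 2 = 1}ᶜ = 0)
    (hUrot : ∀ O : Matrix (Fin 3) (Fin 3) ℝ, O * Oᵀ = 1 →
      Measure.map (fun x => O.mulVec x) U = U) :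
    ∀ ℓ : ℝ,
      Tendsto (fun n => ((Measure.pi (fun _ : Fin n => U))
          {x | Real.sqrt n *
            max |3 * maxEig (Sn 3 n x) - 1| |3 * minEig (Sn 3 n x) - 1| ≤ ℓ}).toReal) atTop
        (𝓝 (if 0 < ℓ then
          2 * stdNormalCDF (Real.sqrt 5 * ℓ / 2) + 6 * stdNormalCDF'' (Real.sqrt 5 * ℓ / 2)
            - 2 * Real.sqrt 3 * stdNormalCDF'' (Real.sqrt 5 * ℓ / Real.sqrt 3) - 1 else 0)) := by
  intro ℓ
  rcases lt_or_ge ℓ 0 with hneg | hnn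
  · rw [if_neg hneg.not_gt]
    refine tendsto_const_nhds.congr fun n => ?_
    have : {x : Fin n → Fin 3 → ℝ | √n *
        max |3 * maxEig (Sn 3 n x) - 1| |3 * minEig (Sn 3 n x) - 1| ≤ ℓ} = ∅ := by
      ext x
      simp only [Set.mem_ofPred_eq, Set.mem_empty_iff_false, iff_false, not_le]
      exact hneg.trans_le (by positivity)
    rw [this, measure_empty, ENNReal.toReal_zero]
  have hlim := tendsto_pi_smul_sum_mem (U := U) (Y := harmonicVec)
    continuous_harmonicVec.measurable (integral_inner_harmonicVec hUsphere hUrot)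
    (integral_inner_harmonicVec_sq hUsphere hUrot)
    (isClosed_spectralBall (√5 * ℓ / 2)).measurableSet
    (stdGaussian_frontier_spectralBall (√5 * ℓ / 2))
  have hval : (stdGaussian (EuclideanSpace ℝ (Fin 5))).real (spectralBall (√5 * ℓ / 2)) =
      if 0 < ℓ then
        2 * stdNormalCDF (√5 * ℓ / 2) + 6 * stdNormalCDF'' (√5 * ℓ / 2)
          - 2 * √3 * stdNormalCDF'' (√5 * ℓ / √3) - 1 else 0 := by
    rcases hnn.eq_or_lt with rfl | hpos
    · simp [stdGaussian_spectralBall_zero]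
    · rw [if_pos hpos, stdGaussian_spectralBall (by positivity),
        show 2 * (√5 * ℓ / 2) = √5 * ℓ by ring]
  rw [hval] at hlim
  refine hlim.congr' ?_
  filter_upwards [eventually_gt_atTop 0] with n hn
  have hsphere : ∀ᵐ x ∂Measure.pi fun _ : Fin n => U, ∀ i, ∑ a, x i a ^ 2 = 1 := by
    refine ae_all_iff.2 fun i => ?_
    exact (Measure.quasiMeasurePreserving_eval (fun _ : Fin n => U) i).ae
      (p := fun y : Fin 3 → ℝ => ∑ a, y a ^ 2 = 1) (by rwa [ae_iff])
  rw [measureReal_def]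
  congr 1
  refine measure_congr ?_
  filter_upwards [hsphere] with x hx
  exact propext (smul_sum_harmonicVec_mem_spectralBall_iff hn hx ℓ)

end
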